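/- Scale-invariant Hölder estimate for the Dirichlet Laplacian on a sector: Let 0 < β < 1/2 and 0 < α < 1. Let f : Ω̄_β → ℝ with 0 < ‖f‖_{∘C^α(Ω̄_β)} < ∞, and let Ψ be the unique function that is continuous on Ω̄_β, twice continuously differentiable on Ω_β, satisfies ∂_{x₁x₁}Ψ + ∂_{x₂x₂}Ψ = f on Ω_β, Ψ = 0 on ∂Ω_β, and |Ψ(x)| ≤ C|x|² ln(e+|x|) for some constant C. Then the Hessian ∇²Ψ satisfies, for constants C, c > 0 depending only on α and β: (i) ‖∇²Ψ‖_{L^∞(Ω_β)} ≤ C ‖f‖_{L^∞(Ω_β)} ( 1 + ln( 1 + c ‖f‖_{∘C^α(Ω̄_β)} / ‖f‖_{L^∞(Ω_β)} ) ); (ii) ‖∇²Ψ‖_{∘C^α(Ω̄_β)} ≤ C ‖f‖_{∘C^α(Ω̄_β)} (each entry of the Hessian obeying this bound). -/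

import Mathlib

open Set Complex
open scoped ENNReal NNReal Real

noncomputable section

/-- The open sector `Ω_β = { r e^{iθ} : r > 0, 0 < θ < βπ }` in `ℂ ≅ ℝ²`. -/
def Sector (β : ℝ) : Set ℂ := {z | z ≠ 0 ∧ 0 < Complex.arg z ∧ Complex.arg z < β * π}

/-- The Laplacian `ΔΨ = ∂_{x₁x₁}Ψ + ∂_{x₂x₂}Ψ` of a function `Ψ : ℂ → ℝ`. -/
def lap (Ψ : ℂ → ℝ) (z : ℂ) : ℝ :=
  fderiv ℝ (fun w => fderiv ℝ Ψ w 1) z 1 +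
    fderiv ℝ (fun w => fderiv ℝ Ψ w Complex.I) z Complex.I

/-- Second partial derivative of `Ψ` in the directions `v₁, v₂ ∈ {1, i}` (an entry of the
Hessian `∇²Ψ`). -/
def hess (Ψ : ℂ → ℝ) (v₁ v₂ : ℂ) (z : ℂ) : ℝ :=
  fderiv ℝ (fun w => fderiv ℝ Ψ w v₁) z v₂

/-- Sup-norm `‖f‖_{L^∞(D)}` of `f : ℂ → ℝ`, valued in `ℝ≥0∞`. -/
def supNormC (D : Set ℂ) (f : ℂ → ℝ) : ℝ≥0∞ := ⨆ z : D, (‖f (z : ℂ)‖₊ : ℝ≥0∞)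

/-- The scale-invariant Hölder norm `‖f‖_{∘C^α(D)}`, valued in `ℝ≥0∞`:
`sup_D |f| + sup_{z ≠ z'} | |z|^α f(z) - |z'|^α f(z') | / |z-z'|^α`. -/
def ringNormC (α : ℝ) (D : Set ℂ) (f : ℂ → ℝ) : ℝ≥0∞ :=
  supNormC D f +
    ⨆ p : {q : D × D // (q.1 : ℂ) ≠ (q.2 : ℂ)},
      (‖(‖(p.1.1 : ℂ)‖ ^ α) * f (p.1.1 : ℂ) - (‖(p.1.2 : ℂ)‖ ^ α) * f (p.1.2 : ℂ)‖₊ : ℝ≥0∞) /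
        ENNReal.ofReal (‖(p.1.1 : ℂ) - (p.1.2 : ℂ)‖ ^ α)

/-- The Hölder seminorm `sup_{z ≠ z'} |f(z) - f(z')| / |z-z'|^α`, valued in `ℝ≥0∞`. -/
def holderSemiC (α : ℝ) (D : Set ℂ) (f : ℂ → ℝ) : ℝ≥0∞ :=
  ⨆ p : {q : D × D // (q.1 : ℂ) ≠ (q.2 : ℂ)},
    (‖f (p.1.1 : ℂ) - f (p.1.2 : ℂ)‖₊ : ℝ≥0∞) /
      ENNReal.ofReal (‖(p.1.1 : ℂ) - (p.1.2 : ℂ)‖ ^ α)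

/-- The uniform Hölder norm `‖f‖_{C^α(D)} = sup_D |f| + Hölder seminorm`. -/
def unifNormC (α : ℝ) (D : Set ℂ) (f : ℂ → ℝ) : ℝ≥0∞ :=
  supNormC D f + holderSemiC α D f

section

open Metric Filter Topology

/-! ### Second derivatives -/

lemma ContDiffAt.differentiableAt_fderiv_apply {u : ℂ → ℝ} {z : ℂ} (hu : ContDiffAt ℝ 2 u z)
    (a : ℂ) : DifferentiableAt ℝ (fun w => fderiv ℝ u w a) z := by
  have h1 : ContDiffAt ℝ 1 (fderiv ℝ u) z := hu.fderiv_right (by norm_num)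
  exact (h1.differentiableAt (by norm_num)).clm_apply (differentiableAt_const a)

lemma ContDiffAt.eventually_differentiableAt {u : ℂ → ℝ} {z : ℂ} (hu : ContDiffAt ℝ 2 u z) :
    ∀ᶠ w in 𝓝 z, DifferentiableAt ℝ u w := by
  filter_upwards [hu.eventually (by simp)] with w hw
  exact hw.differentiableAt (by norm_num)

lemma hess_congr {u v : ℂ → ℝ} {z : ℂ} (h : u =ᶠ[𝓝 z] v) (a b : ℂ) :
    hess u a b z = hess v a b z := by
  unfold hess
  have : (fun w => fderiv ℝ u w a) =ᶠ[𝓝 z] fun w => fderiv ℝ v w a := by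
    filter_upwards [h.fderiv (𝕜 := ℝ)] with w hw
    rw [hw]
  rw [this.fderiv_eq]

lemma hess_add {u v : ℂ → ℝ} {z : ℂ} (hu : ContDiffAt ℝ 2 u z) (hv : ContDiffAt ℝ 2 v z)
    (a b : ℂ) : hess (fun w => u w + v w) a b z = hess u a b z + hess v a b z := by
  unfold hess
  have : (fun w => fderiv ℝ (fun w => u w + v w) w a) =ᶠ[𝓝 z]
      fun w => fderiv ℝ u w a + fderiv ℝ v w a := by
    filter_upwards [hu.eventually_differentiableAt, hv.eventually_differentiableAt] with w h1 h2
    rw [fderiv_fun_add h1 h2, add_apply]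
  rw [this.fderiv_eq, fderiv_fun_add (hu.differentiableAt_fderiv_apply a)
    (hv.differentiableAt_fderiv_apply a), add_apply]

lemma hess_const_mul {u : ℂ → ℝ} {z : ℂ} (hu : ContDiffAt ℝ 2 u z) (c : ℝ)
    (a b : ℂ) : hess (fun w => c * u w) a b z = c * hess u a b z := by
  unfold hess
  have : (fun w => fderiv ℝ (fun w => c * u w) w a) =ᶠ[𝓝 z]
      fun w => c * fderiv ℝ u w a := by
    filter_upwards [hu.eventually_differentiableAt] with w h1
    rw [fderiv_const_mul h1]; simp
  rw [this.fderiv_eq, fderiv_const_mul (hu.differentiableAt_fderiv_apply a)]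
  simp

lemma hess_sub {u v : ℂ → ℝ} {z : ℂ} (hu : ContDiffAt ℝ 2 u z) (hv : ContDiffAt ℝ 2 v z)
    (a b : ℂ) : hess (fun w => u w - v w) a b z = hess u a b z - hess v a b z := by
  have h1 := hess_add hu (contDiffAt_const.mul hv : ContDiffAt ℝ 2 (fun w => (-1) * v w) z) a b
  rw [hess_const_mul hv] at h1
  rw [show (fun w => u w - v w) = fun w => u w + (-1) * v w by ext; ring, h1]
  ring

lemma lap_eq_hess (u : ℂ → ℝ) (z : ℂ) : lap u z = hess u 1 1 z + hess u I I z := rfl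

lemma hess_eq_fderiv_fderiv {u : ℂ → ℝ} {z : ℂ} (hu : ContDiffAt ℝ 2 u z) (a b : ℂ) :
    hess u a b z = fderiv ℝ (fderiv ℝ u) z b a := by
  have h1 : ContDiffAt ℝ 1 (fderiv ℝ u) z := hu.fderiv_right (by norm_num)
  unfold hess
  rw [fderiv_clm_apply (h1.differentiableAt (by norm_num)) (differentiableAt_const a)]
  simp

lemma hess_symm {u : ℂ → ℝ} {z : ℂ} (hu : ContDiffAt ℝ 2 u z) (a b : ℂ) :
    hess u a b z = hess u b a z := by
  rw [hess_eq_fderiv_fderiv hu, hess_eq_fderiv_fderiv hu]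
  exact (hu.isSymmSndFDerivAt (by simp)) b a

lemma hess_re {G : ℂ → ℂ} {V : Set ℂ} (hV : IsOpen V) (hG : DifferentiableOn ℂ G V) {z : ℂ}
    (hz : z ∈ V) (a b : ℂ) :
    hess (fun w => (G w).re) a b z = (iteratedDeriv 2 G z * a * b).re := by
  have key : ∀ {F : ℂ → ℂ} {w : ℂ}, DifferentiableAt ℂ F w → ∀ c : ℂ,
      fderiv ℝ (fun w => (F w).re) w c = (deriv F w * c).re := by
    intro F w hF c
    have h1 : HasFDerivAt F ((ContinuousLinearMap.toSpanSingleton ℂ (deriv F w)).restrictScalars ℝ)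
      w := hF.hasDerivAt.hasFDerivAt.restrictScalars ℝ
    have h2 := (reCLM.hasFDerivAt (x := F w)).comp w h1
    have h3 : fderiv ℝ (fun w => (F w).re) w = _ := h2.fderiv
    rw [h3]
    simp [mul_comm]
  unfold hess
  have h1 : (fun w => fderiv ℝ (fun w => (G w).re) w a) =ᶠ[𝓝 z]
      fun w => (deriv G w * a).re := by
    filter_upwards [hV.mem_nhds hz] with w hw
    exact key ((hG w hw).differentiableAt (hV.mem_nhds hw)) a
  have h2 : DifferentiableAt ℂ (deriv G) z :=
    (hG.deriv hV z hz).differentiableAt (hV.mem_nhds hz)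
  rw [h1.fderiv_eq, key (h2.mul_const a), deriv_mul_const h2, iteratedDeriv_succ, iteratedDeriv_one]

lemma contDiffAt_re {G : ℂ → ℂ} {V : Set ℂ} (hV : IsOpen V) (hG : DifferentiableOn ℂ G V) {z : ℂ}
    (hz : z ∈ V) : ContDiffAt ℝ 2 (fun w => (G w).re) z := by
  have h1 : ContDiffAt ℂ 2 G z := (hG.analyticAt (hV.mem_nhds hz)).contDiffAt
  exact reCLM.contDiff.contDiffAt.comp z (h1.restrict_scalars ℝ)

lemma lap_re {G : ℂ → ℂ} {V : Set ℂ} (hV : IsOpen V) (hG : DifferentiableOn ℂ G V) {z : ℂ}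
    (hz : z ∈ V) : lap (fun w => (G w).re) z = 0 := by
  rw [lap_eq_hess, hess_re hV hG hz, hess_re hV hG hz]
  simp [mul_assoc]

lemma contDiff_im_mul (e : ℂ) : ContDiff ℝ 2 (fun w : ℂ => (e * w).im) :=
  imCLM.contDiff.comp (contDiff_const.mul contDiff_id)

lemma fderiv_im_mul (e w a : ℂ) : fderiv ℝ (fun w : ℂ => (e * w).im) w a = (e * a).im := by
  have : (fun w : ℂ => (e * w).im) = imCLM.comp (ContinuousLinearMap.mul ℝ ℂ e) := by
    ext; simp
  rw [this, ContinuousLinearMap.fderiv]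
  simp

lemma hess_im_mul_im (e₁ e₂ a b z : ℂ) :
    hess (fun w => (e₁ * w).im * (e₂ * w).im) a b z =
      (e₁ * a).im * (e₂ * b).im + (e₁ * b).im * (e₂ * a).im := by
  have hd : ∀ e w, DifferentiableAt ℝ (fun w : ℂ => (e * w).im) w := fun e w =>
    (contDiff_im_mul e).differentiable (by norm_num) w
  unfold hess
  have h1 : (fun w => fderiv ℝ (fun w => (e₁ * w).im * (e₂ * w).im) w a) =
      fun w => (e₂ * a).im * (e₁ * w).im + (e₁ * a).im * (e₂ * w).im := by
    ext w
    rw [fderiv_fun_mul (hd _ _) (hd _ _)]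
    simp only [add_apply, smul_apply, fderiv_im_mul,
      smul_eq_mul]
    ring
  rw [h1, fderiv_fun_add ((hd _ _).const_mul _) ((hd _ _).const_mul _), fderiv_const_mul (hd _ _),
    fderiv_const_mul (hd _ _)]
  simp only [add_apply, smul_apply, fderiv_im_mul,
      smul_eq_mul]
  ring

lemma normSq_sub_eq (c w : ℂ) : normSq (w - c) =
    ((I * w).im * (I * w).im + (1 * w).im * (1 * w).im) +
      ((normSq c : ℂ) - 2 * (starRingEnd ℂ c) * w).re := by
  simp [normSq_apply]; ring

lemma contDiff_normSq_sub (c : ℂ) : ContDiff ℝ 2 (fun w : ℂ => normSq (w - c)) := by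
  have : (fun w : ℂ => normSq (w - c)) = fun w : ℂ => ‖w - c‖ ^ 2 := by
    ext w; rw [Complex.normSq_eq_norm_sq]
  rw [this]
  exact (contDiff_id.sub contDiff_const).norm_sq ℝ

lemma lap_normSq_sub (c z : ℂ) : lap (fun w : ℂ => normSq (w - c)) z = 4 := by
  have hd : Differentiable ℂ (fun w : ℂ => (normSq c : ℂ) - 2 * (starRingEnd ℂ c) * w) := by
    fun_prop
  have h1 : ContDiffAt ℝ 2 (fun w : ℂ => (I * w).im * (I * w).im) z :=
    ((contDiff_im_mul I).mul (contDiff_im_mul I)).contDiffAt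
  have h2 : ContDiffAt ℝ 2 (fun w : ℂ => (1 * w).im * (1 * w).im) z :=
    ((contDiff_im_mul 1).mul (contDiff_im_mul 1)).contDiffAt
  have h3 := contDiffAt_re isOpen_univ hd.differentiableOn (mem_univ z)
  have h4 := lap_re isOpen_univ hd.differentiableOn (mem_univ z)
  rw [show (fun w : ℂ => normSq (w - c)) = _ from funext (normSq_sub_eq c)]
  rw [lap_eq_hess] at h4 ⊢
  rw [hess_add (h1.add h2) h3, hess_add (h1.add h2) h3, hess_add h1 h2, hess_add h1 h2]
  simp only [hess_im_mul_im]
  simp only [one_mul, mul_one, I_im, I_mul_I, neg_im, one_im]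
  linarith

/-! ### The maximum principle -/

lemma IsLocalMax.hess_nonpos {v : ℂ → ℝ} {z : ℂ} (h : IsLocalMax v z) (hv : ContDiffAt ℝ 2 v z)
    (a : ℂ) : hess v a a z ≤ 0 := by
  by_contra! hpos
  set p : ℝ → ℂ := fun t => z + t * a with hp
  have hpd : ∀ t, HasDerivAt p a t := fun t => by
    refine (((hasDerivAt_id t).ofReal_comp.mul_const a).const_add z).congr_deriv ?_
    simp
  have hp0 : p 0 = z := by simp [hp]
  have hpc : Tendsto p (𝓝 0) (𝓝 z) := by
    have := (hpd 0).continuousAt.tendsto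
    rwa [hp0] at this
  have hg1 : deriv (v ∘ p) =ᶠ[𝓝 0] fun t => fderiv ℝ v (p t) a := by
    filter_upwards [hpc.eventually hv.eventually_differentiableAt] with t ht
    exact (ht.hasFDerivAt.comp_hasDerivAt t (hpd t)).deriv
  have hg2 : deriv (deriv (v ∘ p)) 0 = hess v a a z := by
    rw [hg1.deriv_eq]
    have h2 := (hv.differentiableAt_fderiv_apply a).hasFDerivAt
    rw [← hp0] at h2
    have h3 := (h2.comp_hasDerivAt 0 (hpd 0)).deriv
    rw [hp0] at h3
    exact h3
  have hmax : IsLocalMax (v ∘ p) 0 := by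
    have := hpc.eventually h
    filter_upwards [this] with t ht
    simpa [hp0] using ht
  have hmin : IsLocalMin (v ∘ p) 0 := by
    apply isLocalMin_of_deriv_deriv_pos (by rw [hg2]; exact hpos) hmax.deriv_eq_zero
    apply ContinuousAt.comp _ (hpd 0).continuousAt
    rw [hp0]; exact hv.continuousAt
  have hc : (v ∘ p) =ᶠ[𝓝 0] fun _ => (v ∘ p) 0 := by
    filter_upwards [hmax, hmin] with t h1 h2
    exact le_antisymm h1 h2
  rw [hc.deriv.deriv_eq] at hg2
  simp at hg2
  linarith

lemma le_of_lap_pos {V : Set ℂ} (hV : IsOpen V) (hb : Bornology.IsBounded V) {v : ℂ → ℝ}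
    (hc : ContinuousOn v (closure V)) (hs : ContDiffOn ℝ 2 v V) (hl : ∀ w ∈ V, 0 < lap v w)
    {m : ℝ} (hm : ∀ w ∈ frontier V, v w ≤ m) {w : ℂ} (hw : w ∈ closure V) : v w ≤ m := by
  obtain ⟨x, hx, hmax⟩ := hb.isCompact_closure.exists_isMaxOn ⟨w, hw⟩ hc
  refine (hmax hw).trans ?_
  by_cases hxV : x ∈ V
  · exfalso
    have hx' : IsLocalMax v x := by
      filter_upwards [hV.mem_nhds hxV] with y hy using hmax (subset_closure hy)
    have hsx : ContDiffAt ℝ 2 v x := hs.contDiffAt (hV.mem_nhds hxV)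
    have h1 := hx'.hess_nonpos hsx 1
    have h2 := hx'.hess_nonpos hsx I
    have h3 := hl x hxV
    rw [lap_eq_hess] at h3
    linarith
  · exact hm x (by rw [hV.frontier_eq]; exact ⟨hx, hxV⟩)

lemma le_of_neg_lap_le {V : Set ℂ} (hV : IsOpen V) {c : ℂ} {ρ : ℝ} (hb : V ⊆ ball c ρ)
    {v : ℂ → ℝ}
    (hc : ContinuousOn v (closure V)) (hs : ContDiffOn ℝ 2 v V) {η : ℝ} (hη : 0 < η)
    (hl : ∀ w ∈ V, - η ≤ lap v w)
    {m : ℝ} (hm : ∀ w ∈ frontier V, v w ≤ m) {w : ℂ} (hw : w ∈ V) : v w ≤ m + η * ρ ^ 2 / 2 := by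
  have hcl : closure V ⊆ closedBall c ρ := (closure_mono hb).trans closure_ball_subset_closedBall
  have hns : ∀ y, normSq (y - c) = dist y c ^ 2 := fun y => by
    rw [Complex.normSq_eq_norm_sq, dist_eq_norm]
  have hq : ∀ y, ContDiffAt ℝ 2 (fun y : ℂ => η / 2 * normSq (y - c)) y := fun y =>
    (contDiff_const.mul (contDiff_normSq_sub c)).contDiffAt
  have key := le_of_lap_pos hV (isBounded_ball.subset hb)
    (v := fun y => v y + η / 2 * normSq (y - c)) (m := m + η * ρ ^ 2 / 2)
    (hc.add fun y _ => (hq y).continuousAt.continuousWithinAt)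
    (hs.add fun y _ => (hq y).contDiffWithinAt) ?_ ?_ (subset_closure hw)
  · have := normSq_nonneg (w - c)
    nlinarith
  · intro y hy
    have hsy := hs.contDiffAt (hV.mem_nhds hy)
    have h4 := lap_normSq_sub c y
    have hly := hl y hy
    rw [lap_eq_hess] at hly h4 ⊢
    rw [hess_add hsy (hq y), hess_add hsy (hq y),
      hess_const_mul (contDiff_normSq_sub c).contDiffAt,
      hess_const_mul (contDiff_normSq_sub c).contDiffAt]
    have : η / 2 * (hess (fun w : ℂ => normSq (w - c)) 1 1 y +
      hess (fun w : ℂ => normSq (w - c)) I I y) = η / 2 * 4 := by rw [h4]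
    linarith
  · intro y hy
    have h1 : dist y c ≤ ρ := hcl (frontier_subset_closure hy)
    have h2 : dist y c ^ 2 ≤ ρ ^ 2 := pow_le_pow_left₀ dist_nonneg h1 2
    have := hm y hy
    rw [hns]
    nlinarith

lemma abs_le_of_abs_lap_le {V : Set ℂ} (hV : IsOpen V) {c : ℂ} {ρ : ℝ} (hb : V ⊆ ball c ρ)
    {v : ℂ → ℝ}
    (hc : ContinuousOn v (closure V)) (hs : ContDiffOn ℝ 2 v V) {η : ℝ} (hη : 0 < η)
    (hl : ∀ w ∈ V, |lap v w| ≤ η)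
    {m : ℝ} (hm : ∀ w ∈ frontier V, |v w| ≤ m) {w : ℂ} (hw : w ∈ V) :
    |v w| ≤ m + η * ρ ^ 2 / 2 := by
  rw [abs_le]
  constructor
  · have := le_of_neg_lap_le hV hb (v := fun y => (-1) * v y) (continuousOn_const.mul hc)
      (contDiffOn_const.mul hs) hη (fun y hy => ?_) (m := m) (fun y hy => ?_) hw
    · linarith
    · have hsy := hs.contDiffAt (hV.mem_nhds hy)
      have h1 := (abs_le.1 (hl y hy)).2
      rw [lap_eq_hess] at h1 ⊢
      rw [hess_const_mul hsy, hess_const_mul hsy]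
      linarith
    · linarith [(abs_le.1 (hm y hy)).1]
  · exact le_of_neg_lap_le hV hb hc hs hη (fun y hy => (abs_le.1 (hl y hy)).1)
      (fun y hy => (abs_le.1 (hm y hy)).2) hw

/-! ### Second order Taylor expansion -/

lemma taylor_two {u : ℂ → ℝ} {z : ℂ} (hu : ContDiffAt ℝ 2 u z) {ε : ℝ} (hε : 0 < ε) :
    ∃ δ > 0, ∀ w ∈ ball z δ, |u w - (u z + fderiv ℝ u z (w - z) +
      1 / 2 * fderiv ℝ (fderiv ℝ u) z (w - z) (w - z))| ≤ ε * ‖w - z‖ ^ 2 := by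
  have h1 : ContDiffAt ℝ 1 (fderiv ℝ u) z := hu.fderiv_right (by norm_num)
  have hsymm : ∀ a b, fderiv ℝ (fderiv ℝ u) z a b = fderiv ℝ (fderiv ℝ u) z b a :=
    fun a b => (hu.isSymmSndFDerivAt (by simp)) a b
  set B := fderiv ℝ (fderiv ℝ u) z with hB
  have h2 : HasFDerivAt (fderiv ℝ u) B z := (h1.differentiableAt (by norm_num)).hasFDerivAt
  have h3 := h2.isLittleO.def hε
  obtain ⟨δ, hδ, hball⟩ := Metric.eventually_nhds_iff_ball.1
    (h3.and hu.eventually_differentiableAt)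
  refine ⟨δ, hδ, fun w hw => ?_⟩
  set φ : ℂ → ℝ := fun y => u y - (u z + fderiv ℝ u z (y - z) + 1 / 2 * B (y - z) (y - z))
    with hφ
  have hφ' : ∀ y ∈ ball z δ, HasFDerivAt φ (fderiv ℝ u y - (fderiv ℝ u z + B (y - z))) y := by
    intro y hy
    have hd := (hball y hy).2.hasFDerivAt
    have hs : HasFDerivAt (fun y : ℂ => y - z) (ContinuousLinearMap.id ℝ ℂ) y :=
      (hasFDerivAt_id y).sub_const z
    have hl := (fderiv ℝ u z).hasFDerivAt.comp y hs
    have hb := ((B.hasFDerivAt.comp y hs).clm_apply hs).const_mul (1 / 2 : ℝ)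
    have := hd.sub ((hl.const_add (u z)).add hb)
    refine this.congr_fderiv ?_
    ext a
    have e1 := hsymm a y
    have e2 := hsymm a z
    simp
    linarith
  have hsub : segment ℝ z w ⊆ ball z δ :=
    (convex_ball z δ).segment_subset (mem_ball_self hδ) hw
  have hmv := (convex_segment z w).norm_image_sub_le_of_norm_hasFDerivWithin_le (f := φ)
    (C := ε * ‖w - z‖) (fun y hy => (hφ' y (hsub hy)).hasFDerivWithinAt) (fun y hy => ?_)
    (left_mem_segment ℝ z w) (right_mem_segment ℝ z w)
  · have h0 : φ z = 0 := by simp [hφ]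
    rw [h0, sub_zero, Real.norm_eq_abs] at hmv
    calc _ = |φ w| := rfl
      _ ≤ _ := hmv
      _ = _ := by ring
  · have h4 := (hball y (hsub hy)).1
    rw [sub_sub] at h4
    refine h4.trans ?_
    gcongr
    have := (convex_closedBall z (‖w - z‖)).segment_subset
      (mem_closedBall_self (norm_nonneg _)) (by simp [dist_eq_norm]) hy
    simpa [dist_eq_norm] using this

/-! ### Interior derivative estimates for harmonic functions -/

lemma norm_iteratedDeriv_le_of_abs_re_le {F : ℂ → ℂ} (hF : Differentiable ℂ F) {z : ℂ} {s A : ℝ}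
    (hs : 0 < s) (hA : 0 < A) (h : ∀ w ∈ ball z s, |(F w).re| ≤ A) {n : ℕ} (hn : n ≠ 0) {w : ℂ}
    (hw : w ∈ closedBall z (s / 4)) :
    ‖iteratedDeriv n F w‖ ≤ n.factorial * (4 * A) / (s / 4) ^ n := by
  have hb : ∀ y ∈ closedBall z (s / 2), ‖F y - F z‖ ≤ 4 * A := by
    intro y hy
    have hy' : ‖y - z‖ ≤ s / 2 := by simpa [dist_eq_norm] using hy
    have := borelCaratheodory_zero (f := fun x => F (z + x) - F z) (M := 2 * A) (R := s)
      (z := y - z) (by positivity) (by fun_prop) (fun x hx => ?_) hs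
      (by simp; linarith) (by simp)
    · simp only [add_sub_cancel] at this
      refine this.trans ?_
      rw [div_le_iff₀ (by linarith)]
      nlinarith
    · have h1 := (abs_le.1 (h (z + x) (by simpa [dist_eq_norm] using hx))).2
      have h2 := (abs_le.1 (h z (mem_ball_self hs))).1
      simp only [mem_ofPred_eq, sub_re]
      linarith
  have h1 := norm_iteratedDeriv_le_of_forall_mem_sphere_norm_le (f := fun y => F y - F z)
    (c := w) (R := s / 4) (C := 4 * A) n (by positivity)
    (Differentiable.diffContOnCl (by fun_prop)) (fun y hy => hb y ?_)
  · rwa [iteratedDeriv_fun_sub hF.contDiff.contDiffAt contDiffAt_const, iteratedDeriv_const,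
      if_neg hn, sub_zero] at h1
  · have a1 : dist y w = s / 4 := hy
    have a2 : dist w z ≤ s / 4 := hw
    have := dist_triangle y w z
    simp only [mem_closedBall]
    linarith

/-! ### Approximation of continuous functions on circles by harmonic functions -/

local instance : Fact (0 < 2 * π) := ⟨Real.two_pi_pos⟩

lemma exists_entire_re_eq_of_mem_span_fourier {p : C(AddCircle (2 * π), ℂ)}
    (hp : p ∈ Submodule.span ℂ (range (@fourier (2 * π)))) :
    ∃ P Q : ℂ → ℂ, Differentiable ℂ P ∧ Differentiable ℂ Q ∧
      ∀ x, (p x).re = (P (AddCircle.toCircle x)).re ∧ (p x).im = (Q (AddCircle.toCircle x)).re := by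
  induction hp using Submodule.span_induction with
  | mem p hp =>
    obtain ⟨n, rfl⟩ := hp
    obtain ⟨k, rfl | rfl⟩ := n.eq_nat_or_neg
    · refine ⟨fun w => w ^ k, fun w => - I * w ^ k, by fun_prop, by fun_prop, fun x => ?_⟩
      simp [fourier_apply, AddCircle.toCircle_nsmul]
    · refine ⟨fun w => w ^ k, fun w => I * w ^ k, by fun_prop, by fun_prop, fun x => ?_⟩
      simp [fourier_apply, AddCircle.toCircle_neg, AddCircle.toCircle_nsmul]
  | zero => exact ⟨0, 0, by fun_prop, by fun_prop, by simp⟩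
  | add p q _ _ h1 h2 =>
    obtain ⟨P, Q, hP, hQ, h⟩ := h1
    obtain ⟨P', Q', hP', hQ', h'⟩ := h2
    exact ⟨P + P', Q + Q', hP.add hP', hQ.add hQ', fun x => by
      simp [(h x).1, (h x).2, (h' x).1, (h' x).2]⟩
  | smul c p _ h1 =>
    obtain ⟨P, Q, hP, hQ, h⟩ := h1
    refine ⟨fun w => (c.re : ℂ) * P w - c.im * Q w, fun w => (c.re : ℂ) * Q w + c.im * P w,
      by fun_prop, by fun_prop, fun x => ?_⟩
    simp [(h x).1, (h x).2]

lemma exists_entire_re_approx {a : ℂ} {ρ : ℝ} (hρ : 0 < ρ) {g : ℂ → ℝ}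
    (hg : ContinuousOn g (sphere a ρ)) {ε : ℝ} (hε : 0 < ε) :
    ∃ P : ℂ → ℂ, Differentiable ℂ P ∧ ∀ w ∈ sphere a ρ, |g w - (P w).re| ≤ ε := by
  have hmem : ∀ x : AddCircle (2 * π), a + ρ * (AddCircle.toCircle x : ℂ) ∈ sphere a ρ := by
    intro x
    have := Circle.norm_coe (AddCircle.toCircle x)
    simp [abs_of_pos hρ, this]
  let G : C(AddCircle (2 * π), ℂ) :=
    ⟨fun x => (g (a + ρ * (AddCircle.toCircle x : ℂ)) : ℂ), by
      refine continuous_ofReal.comp (hg.comp_continuous ?_ hmem)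
      have := AddCircle.continuous_toCircle (T := 2 * π)
      fun_prop⟩
  have hG : G ∈ (Submodule.span ℂ (range (@fourier (2 * π)))).topologicalClosure := by
    rw [span_fourier_closure_eq_top]; trivial
  have hG' : G ∈ closure
      ((Submodule.span ℂ (range (@fourier (2 * π)))) : Set C(AddCircle (2 * π), ℂ)) := hG
  obtain ⟨p, hp, hd⟩ := Metric.mem_closure_iff.1 hG' ε hε
  obtain ⟨P, _, hP, _, h⟩ := exists_entire_re_eq_of_mem_span_fourier hp
  refine ⟨fun w => P ((w - a) / ρ), by fun_prop, fun w hw => ?_⟩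
  have hn : ‖(w - a) / ρ‖ = 1 := by
    rw [norm_div, ← dist_eq_norm, mem_sphere.1 hw]; simp [abs_of_pos hρ, hρ.ne']
  obtain ⟨x, hx⟩ := (AddCircle.homeomorphCircle (T := 2 * π) Real.two_pi_pos.ne').surjective
    ⟨(w - a) / ρ, by simpa [Submonoid.unitSphere] using hn⟩
  rw [AddCircle.homeomorphCircle_apply] at hx
  have hx' : (AddCircle.toCircle x : ℂ) = (w - a) / ρ := by rw [hx]
  have hρ' : (ρ : ℂ) ≠ 0 := by exact_mod_cast hρ.ne'
  have hGx : G x = (g w : ℂ) := by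
    change ((g (a + ρ * (AddCircle.toCircle x : ℂ)) : ℝ) : ℂ) = g w
    rw [hx', mul_div_cancel₀ _ hρ', add_sub_cancel]
  have h1 : ‖G x - p x‖ ≤ ε := by
    rw [← dist_eq_norm]
    exact (ContinuousMap.dist_apply_le_dist x).trans hd.le
  have h2 := (abs_re_le_norm (G x - p x)).trans h1
  rw [hGx, sub_re, ofReal_re, (h x).1, hx'] at h2
  exact h2

/-! ### The Dirichlet problem near a half-plane boundary -/

/-- The quadratic function `Im(e w)² / 2`, which vanishes on the line `Im(e w) = 0` and has
Laplacian `‖e‖²`. -/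
def halfQuad (e w : ℂ) : ℝ := 1 / 2 * ((e * w).im * (e * w).im)

/-- The reflection across the line `Im(e w) = 0`, for `‖e‖ = 1`. -/
def lineReflect (e w : ℂ) : ℂ := starRingEnd ℂ e * starRingEnd ℂ (e * w)

/-- `u` solves `Δu = f` on the part of the disc `ball z R` in the half-plane `Im(e w) > 0`,
with zero boundary values on the line `Im(e w) = 0`. -/
structure IsHalfSol (e : ℂ) (u f : ℂ → ℝ) (z : ℂ) (R : ℝ) : Prop where
  cont : ContinuousOn u (ball z R ∩ {w | 0 ≤ (e * w).im})
  smooth : ContDiffOn ℝ 2 u (ball z R ∩ {w | 0 < (e * w).im})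
  lap_eq : ∀ w ∈ ball z R, 0 < (e * w).im → lap u w = f w
  bdry : ∀ w ∈ ball z R, (e * w).im = 0 → u w = 0

/-- `Re G + f₀ Im(e w)² / 2` approximates `u` to order `r² η` on the part of `ball z r` in the
half-plane `Im(e w) > 0`, where `G` is entire, and `Re G` is odd if the ball meets the line. -/
structure IsApprox (e : ℂ) (u : ℂ → ℝ) (f₀ : ℝ) (z : ℂ) (r η : ℝ) (G : ℂ → ℂ) : Prop where
  diff : Differentiable ℂ G
  le : ∀ w ∈ ball z r, 0 < (e * w).im → |u w - f₀ * halfQuad e w - (G w).re| ≤ 3 * r ^ 2 * η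
  odd : r ≤ (e * z).im ∨ ∀ w, (G (lineReflect e w)).re = - (G w).re

lemma isOpen_halfPlane (e : ℂ) : IsOpen {w : ℂ | 0 < (e * w).im} :=
  isOpen_lt continuous_const (contDiff_im_mul e).continuous

lemma isClosed_halfPlane (e : ℂ) : IsClosed {w : ℂ | 0 ≤ (e * w).im} :=
  isClosed_le continuous_const (contDiff_im_mul e).continuous

lemma contDiff_halfQuad (e : ℂ) : ContDiff ℝ 2 (halfQuad e) :=
  contDiff_const.mul ((contDiff_im_mul e).mul (contDiff_im_mul e))

lemma hess_halfQuad (e a b z : ℂ) : hess (halfQuad e) a b z = (e * a).im * (e * b).im := by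
  have := hess_const_mul (((contDiff_im_mul e).mul (contDiff_im_mul e)).contDiffAt (x := z))
    (1 / 2) a b
  rw [hess_im_mul_im] at this
  change hess (fun w => 1 / 2 * ((e * w).im * (e * w).im)) a b z = _
  rw [this]
  ring

lemma re_sq_add_im_sq {e : ℂ} (he : ‖e‖ = 1) : e.re ^ 2 + e.im ^ 2 = 1 := by
  have := Complex.normSq_eq_norm_sq e
  rw [he, normSq_apply] at this
  linarith

lemma mul_lineReflect {e : ℂ} (he : ‖e‖ = 1) (w : ℂ) :
    e * lineReflect e w = starRingEnd ℂ (e * w) := by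
  rw [lineReflect, ← mul_assoc, mul_conj, normSq_eq_norm_sq, he]; simp

lemma lineReflect_lineReflect {e : ℂ} (he : ‖e‖ = 1) (w : ℂ) :
    lineReflect e (lineReflect e w) = w := by
  conv_lhs => rw [lineReflect]
  rw [mul_lineReflect he, conj_conj, ← mul_assoc, mul_comm (starRingEnd ℂ e), mul_conj,
    normSq_eq_norm_sq, he]
  simp

lemma lineReflect_eq_self {e : ℂ} (he : ‖e‖ = 1) {w : ℂ} (hw : (e * w).im = 0) :
    lineReflect e w = w := by
  rw [lineReflect, conj_eq_iff_im.2 hw, ← mul_assoc, mul_comm (starRingEnd ℂ e), mul_conj,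
    normSq_eq_norm_sq, he]
  simp

lemma continuous_lineReflect (e : ℂ) : Continuous (lineReflect e) := by
  unfold lineReflect
  fun_prop

lemma dist_lineReflect {e : ℂ} (he : ‖e‖ = 1) (w z : ℂ) :
    dist (lineReflect e w) (lineReflect e z) = dist w z := by
  rw [dist_eq_norm, dist_eq_norm, lineReflect, lineReflect, ← mul_sub, ← map_sub, ← mul_sub,
    norm_mul, norm_conj, norm_conj, norm_mul, he, one_mul, one_mul]

lemma abs_im_mul_le {e : ℂ} (he : ‖e‖ = 1) (w : ℂ) : |(e * w).im| ≤ ‖w‖ := by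
  have := abs_im_le_norm (e * w)
  rwa [norm_mul, he, one_mul] at this

lemma abs_im_sub_le {e : ℂ} (he : ‖e‖ = 1) (w z : ℂ) : |(e * w).im - (e * z).im| ≤ dist w z := by
  rw [dist_eq_norm, ← sub_im, ← mul_sub]
  exact abs_im_mul_le he _

/-- A point and its reflection: the reflected point of a point on the other side is closer. -/
lemma dist_lineReflect_le {e : ℂ} (he : ‖e‖ = 1) {w z : ℂ} (hz : 0 ≤ (e * z).im)
    (hw : (e * w).im ≤ 0) : dist (lineReflect e w) z ≤ dist w z := by
  have h1 : ∀ x y : ℂ, dist x y ^ 2 =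
      ((e * x).re - (e * y).re) ^ 2 + ((e * x).im - (e * y).im) ^ 2 := fun x y => by
    have : dist x y = ‖e * x - e * y‖ := by rw [← mul_sub, norm_mul, he, one_mul, dist_eq_norm]
    rw [this, ← normSq_eq_norm_sq, normSq_apply, sub_re, sub_im]; ring
  apply le_of_sq_le_sq _ dist_nonneg
  rw [h1, h1, mul_lineReflect he, conj_re, conj_im]
  nlinarith

lemma IsHalfSol.mono {e : ℂ} {u f : ℂ → ℝ} {z z' : ℂ} {R R' : ℝ} (h : IsHalfSol e u f z R)
    (hb : ball z' R' ⊆ ball z R) : IsHalfSol e u f z' R' where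
  cont := h.cont.mono (inter_subset_inter_left _ hb)
  smooth := h.smooth.mono (inter_subset_inter_left _ hb)
  lap_eq w hw := h.lap_eq w (hb hw)
  bdry w hw := h.bdry w (hb hw)

lemma IsHalfSol.contDiffAt {e : ℂ} {u f : ℂ → ℝ} {z : ℂ} {R : ℝ} (h : IsHalfSol e u f z R)
    {w : ℂ} (hw : w ∈ ball z R) (hw' : 0 < (e * w).im) : ContDiffAt ℝ 2 u w :=
  h.smooth.contDiffAt ((isOpen_ball.inter (isOpen_halfPlane e)).mem_nhds ⟨hw, hw'⟩)

lemma hess_sub_approx {e : ℂ} {u : ℂ → ℝ} {w : ℂ} (hu : ContDiffAt ℝ 2 u w) {G : ℂ → ℂ}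
    (hG : Differentiable ℂ G) (f₀ : ℝ) (a b : ℂ) :
    hess (fun w => u w - f₀ * halfQuad e w - (G w).re) a b w =
      hess u a b w - f₀ * ((e * a).im * (e * b).im) - (iteratedDeriv 2 G w * a * b).re := by
  have h1 := (contDiff_halfQuad e).contDiffAt (x := w)
  have h2 : ContDiffAt ℝ 2 (fun w => f₀ * halfQuad e w) w := contDiffAt_const.mul h1
  rw [hess_sub (hu.sub h2) (contDiffAt_re isOpen_univ hG.differentiableOn (mem_univ w)),
    hess_sub hu h2, hess_const_mul h1, hess_halfQuad,
    hess_re isOpen_univ hG.differentiableOn (mem_univ w)]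

lemma IsHalfSol.sub_approx {e : ℂ} (he : ‖e‖ = 1) {u f : ℂ → ℝ} {z : ℂ} {R : ℝ}
    (h : IsHalfSol e u f z R) {G : ℂ → ℂ} (hG : Differentiable ℂ G)
    (hodd : R ≤ (e * z).im ∨ ∀ w, (G (lineReflect e w)).re = - (G w).re) (f₀ : ℝ) :
    IsHalfSol e (fun w => u w - f₀ * halfQuad e w - (G w).re) (fun w => f w - f₀) z R where
  cont := by
    have h1 := (contDiff_halfQuad e).continuous
    have h2 : Continuous fun w => (G w).re := continuous_re.comp hG.continuous
    exact (h.cont.sub (by fun_prop)).sub h2.continuousOn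
  smooth := by
    intro w hw
    have h1 := (contDiff_halfQuad e).contDiffAt (x := w)
    have h2 : ContDiffAt ℝ 2 (fun w => f₀ * halfQuad e w) w := contDiffAt_const.mul h1
    exact (((h.contDiffAt hw.1 hw.2).sub h2).sub
      (contDiffAt_re isOpen_univ hG.differentiableOn (mem_univ w))).contDiffWithinAt
  lap_eq w hw hw' := by
    have h1 := h.lap_eq w hw hw'
    have h2 := re_sq_add_im_sq he
    have hu := h.contDiffAt hw hw'
    rw [lap_eq_hess] at h1 ⊢
    rw [hess_sub_approx hu hG, hess_sub_approx hu hG]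
    simp only [mul_one, mul_assoc, I_mul_I, mul_im, I_re, I_im, mul_zero, add_zero, mul_neg,
      neg_re]
    linear_combination h1 - f₀ * h2
  bdry w hw hw' := by
    have h1 : (G w).re = 0 := by
      rcases hodd with h | h
      · have := (abs_le.1 (abs_im_sub_le he w z)).1
        have h2 : dist w z < R := hw
        linarith
      · have := h w
        rw [lineReflect_eq_self he hw'] at this
        linarith
    simp [h1, h.bdry w hw hw', halfQuad, hw']

lemma IsHalfSol.exists_isApprox {e : ℂ} (he : ‖e‖ = 1) {u f : ℂ → ℝ} {z : ℂ} {r : ℝ}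
    (hr : 0 < r) (hz : 0 < (e * z).im) (h : IsHalfSol e u f z (4 * r)) {f₀ η : ℝ} (hη : 0 < η)
    (hf : ∀ w ∈ ball z (4 * r), 0 < (e * w).im → |f w - f₀| ≤ η) :
    ∃ G, IsApprox e u f₀ z r η G := by
  have hv := h.sub_approx he (G := fun _ => 0) (by fun_prop) (Or.inr (by simp)) f₀
  simp only [zero_re, sub_zero] at hv
  set v : ℂ → ℝ := fun w => u w - f₀ * halfQuad e w with hvdef
  have hlap : ∀ {G : ℂ → ℂ}, Differentiable ℂ G → ∀ w ∈ ball z (4 * r), 0 < (e * w).im →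
      |lap (fun w => v w - (G w).re) w| ≤ η := by
    intro G hG w hw hw'
    have hvw := hv.contDiffAt hw hw'
    have h0 := contDiffAt_re isOpen_univ hG.differentiableOn (mem_univ w)
    have h1 := hv.lap_eq w hw hw'
    have h2 := lap_re isOpen_univ hG.differentiableOn (mem_univ w)
    rw [lap_eq_hess] at h1 h2 ⊢
    rw [hess_sub hvw h0, hess_sub hvw h0]
    have := hf w hw hw'
    rw [← h1] at this
    rwa [show ∀ a b c d : ℝ, a - b + (c - d) = a + c - (b + d) by intros; ring, h2, sub_zero]
  have hε : 0 < r ^ 2 * η := by positivity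
  rcases le_or_gt r (e * z).im with hd | hd
  · have hsub : closedBall z r ⊆ ball z (4 * r) ∩ {w | 0 ≤ (e * w).im} := by
      intro w hw
      have h1 := (abs_le.1 (abs_im_sub_le he w z)).1
      have h2 : dist w z ≤ r := hw
      refine ⟨?_, ?_⟩
      · rw [mem_ball]; linarith
      · rw [mem_ofPred_eq]; linarith
    have hsub' : ball z r ⊆ ball z (4 * r) ∩ {w | 0 < (e * w).im} := by
      intro w hw
      have h1 := (abs_le.1 (abs_im_sub_le he w z)).1
      have h2 : dist w z < r := hw
      refine ⟨?_, ?_⟩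
      · rw [mem_ball]; linarith
      · rw [mem_ofPred_eq]; linarith
    obtain ⟨P, hP, hPa⟩ := exists_entire_re_approx hr
      (hv.cont.mono (sphere_subset_closedBall.trans hsub)) hε
    have hPc : Continuous fun w => (P w).re := continuous_re.comp hP.continuous
    refine ⟨P, hP, fun w hw _ => ?_, Or.inl hd⟩
    have := abs_le_of_abs_lap_le isOpen_ball (Subset.refl (ball z r))
      (v := fun w => v w - (P w).re)
      (((hv.cont.mono hsub).mono closure_ball_subset_closedBall).sub hPc.continuousOn)
      ((hv.smooth.mono hsub').sub fun w _ =>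
        (contDiffAt_re isOpen_univ hP.differentiableOn (mem_univ w)).contDiffWithinAt)
      hη (fun y hy => hlap hP y (hsub' hy).1 (hsub' hy).2)
      (fun y hy => hPa y (frontier_ball_subset_sphere hy)) hw
    refine this.trans ?_
    nlinarith
  · set z' : ℂ := z - I * (e * z).im * starRingEnd ℂ e with hz'
    have hee : e * starRingEnd ℂ e = 1 := by rw [mul_conj, normSq_eq_norm_sq, he]; simp
    have hez' : e * z' = e * z - I * (e * z).im := by
      rw [hz', mul_sub]; linear_combination (- I * (e * z).im) * hee
    have hz'0 : (e * z').im = 0 := by rw [hez']; simp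
    have hdz : dist z z' = (e * z).im := by
      rw [dist_eq_norm, hz', sub_sub_cancel]
      rw [norm_mul, norm_mul, norm_conj, he, norm_I, norm_real, Real.norm_eq_abs, abs_of_pos hz]
      ring
    have hcb : ∀ w ∈ closedBall z' (2 * r), w ∈ ball z (4 * r) := by
      intro w hw
      have h1 := dist_triangle w z' z
      rw [dist_comm z' z, hdz] at h1
      have h2 : dist w z' ≤ 2 * r := hw
      rw [mem_ball]; linarith
    have hrz : ∀ w, dist (lineReflect e w) z' = dist w z' := by
      intro w
      conv_lhs => rw [← lineReflect_eq_self he hz'0]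
      exact dist_lineReflect he _ _
    classical
    set g : ℂ → ℝ := fun w => if 0 ≤ (e * w).im then v w else - v (lineReflect e w) with hg
    have hrim : ∀ w, (e * lineReflect e w).im = - (e * w).im := fun w => by
      rw [mul_lineReflect he, conj_im]
    have hgc : ContinuousOn g (sphere z' (2 * r)) := by
      have h1 : ContinuousOn g (sphere z' (2 * r) ∩ {w | 0 ≤ (e * w).im}) := by
        refine ContinuousOn.congr (f := v) (hv.cont.mono ?_) (fun w hw => ?_)
        · exact inter_subset_inter_left _ fun w hw => hcb w (sphere_subset_closedBall hw)
        · exact if_pos hw.2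
      have h2 : ContinuousOn g (sphere z' (2 * r) ∩ {w | (e * w).im ≤ 0}) := by
        refine ContinuousOn.congr (f := fun w => - v (lineReflect e w))
          (ContinuousOn.neg (hv.cont.comp (continuous_lineReflect e).continuousOn ?_))
          (fun w hw => ?_)
        · intro w hw
          refine ⟨hcb _ ?_, ?_⟩
          · rw [mem_closedBall, hrz]; exact (mem_sphere.1 hw.1).le
          · rw [mem_ofPred_eq, hrim]; linarith [hw.2.out]
        · rcases eq_or_lt_of_le hw.2.out with h0 | h0
          · simp only [hg]
            rw [if_pos h0.ge, lineReflect_eq_self he h0,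
              hv.bdry w (hcb w (sphere_subset_closedBall hw.1)) h0, neg_zero]
          · exact if_neg (not_le.2 h0)
      have h3 := h1.union_of_isClosed h2 (isClosed_sphere.inter (isClosed_halfPlane e))
        (isClosed_sphere.inter (isClosed_le (contDiff_im_mul e).continuous continuous_const))
      refine h3.mono fun w hw => ?_
      rcases le_total 0 (e * w).im with h | h
      · exact Or.inl ⟨hw, h⟩
      · exact Or.inr ⟨hw, h⟩
    obtain ⟨P, hP, hPa⟩ := exists_entire_re_approx (by positivity) hgc hε
    set Q : ℂ → ℂ := fun w => (P w - starRingEnd ℂ (P (lineReflect e w))) / 2 with hQ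
    have hQre : ∀ w, (Q w).re = ((P w).re - (P (lineReflect e w)).re) / 2 := fun w => by
      have : Q w = (((1 / 2 : ℝ) : ℂ)) * (P w - starRingEnd ℂ (P (lineReflect e w))) := by
        simp only [hQ]; push_cast; ring
      rw [this, re_ofReal_mul, sub_re, conj_re]; ring
    have hQd : Differentiable ℂ Q := by
      have h1 : Differentiable ℂ (fun x => P (starRingEnd ℂ e * x)) := by fun_prop
      have h2 : Differentiable ℂ
          (starRingEnd ℂ ∘ (fun x => P (starRingEnd ℂ e * x)) ∘ starRingEnd ℂ) :=
        fun x => by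
          have := (h1 (starRingEnd ℂ x)).conj_conj
          simpa using this
      have h3 : Differentiable ℂ (fun w => e * w) := by fun_prop
      have h4 := h2.comp h3
      exact (hP.sub h4).div_const 2
    have hQodd : ∀ w, (Q (lineReflect e w)).re = - (Q w).re := fun w => by
      rw [hQre, hQre, lineReflect_lineReflect he]; ring
    have hQc : Continuous fun w => (Q w).re := continuous_re.comp hQd.continuous
    set V : Set ℂ := ball z' (2 * r) ∩ {w | 0 < (e * w).im} with hV
    have hVo : IsOpen V := isOpen_ball.inter (isOpen_halfPlane e)
    have hVc : closure V ⊆ closedBall z' (2 * r) ∩ {w | 0 ≤ (e * w).im} := by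
      apply closure_minimal _ (isClosed_closedBall.inter (isClosed_halfPlane e))
      exact inter_subset_inter ball_subset_closedBall fun w hw =>
        le_of_lt (show 0 < (e * w).im from hw)
    refine ⟨Q, hQd, fun w hw hw' => ?_, Or.inr hQodd⟩
    have hwV : w ∈ V := by
      refine ⟨?_, hw'⟩
      have h1 := dist_triangle w z z'
      rw [hdz] at h1
      have h2 : dist w z < r := hw
      rw [mem_ball]; linarith
    have := abs_le_of_abs_lap_le hVo (inter_subset_left : V ⊆ ball z' (2 * r))
      (v := fun w => v w - (Q w).re) (m := r ^ 2 * η)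
      ((hv.cont.mono (hVc.trans (inter_subset_inter_left _ hcb))).sub hQc.continuousOn)
      ((hv.smooth.mono (inter_subset_inter_left _ fun w hw => hcb w
        (ball_subset_closedBall hw))).sub fun w _ =>
        (contDiffAt_re isOpen_univ hQd.differentiableOn (mem_univ w)).contDiffWithinAt)
      hη (fun y hy => hlap hQd y (hcb y (ball_subset_closedBall hy.1)) hy.2)
      (fun y hy => ?_) hwV
    · refine this.trans (le_of_eq ?_)
      ring
    · have hyc := hVc (frontier_subset_closure hy)
      have hyV : y ∉ V := by
        rw [hVo.frontier_eq] at hy; exact hy.2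
      rcases eq_or_lt_of_le hyc.2.out with h0 | h0
      · have h1 := hQodd y
        rw [lineReflect_eq_self he h0.symm] at h1
        have h2 : (Q y).re = 0 := by linarith
        rw [hv.bdry y (hcb y hyc.1) h0.symm, h2]
        simpa using hε.le
      · have hys : dist y z' = 2 * r := by
          refine le_antisymm hyc.1 (not_lt.1 fun hlt => hyV ⟨hlt, h0⟩)
        have h1 := hPa y hys
        have h2 := hPa (lineReflect e y) (by rw [mem_sphere, hrz, hys])
        have h3 : g y = v y := if_pos hyc.2
        have h4 : g (lineReflect e y) = - v y := by
          simp only [hg]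
          rw [if_neg (by rw [hrim]; linarith), lineReflect_lineReflect he]
        rw [h3] at h1
        rw [h4] at h2
        rw [hQre]
        rw [abs_le] at h1 h2 ⊢
        constructor <;> linarith

/-- The complex number encoding the trace-free part of the Hessian of `u` at `z` relative to the
direction `e`: the second derivatives of `u` are
`Δu * Im (e a) * Im (e b) + Re (scHess e u z * a * b)`. -/
def scHess (e : ℂ) (u : ℂ → ℝ) (z : ℂ) : ℂ :=
  ⟨hess u 1 1 z - lap u z * e.im ^ 2, -(hess u 1 I z - lap u z * (e.re * e.im))⟩

lemma hess_eq_scHess {e : ℂ} (he : ‖e‖ = 1) {u : ℂ → ℝ} {z : ℂ} (hu : ContDiffAt ℝ 2 u z)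
    {v₁ v₂ : ℂ} (h₁ : v₁ ∈ ({1, I} : Set ℂ)) (h₂ : v₂ ∈ ({1, I} : Set ℂ)) :
    hess u v₁ v₂ z = lap u z * ((e * v₁).im * (e * v₂).im) + (scHess e u z * v₁ * v₂).re := by
  have h := re_sq_add_im_sq he
  have hs := hess_symm hu I 1
  have hl := lap_eq_hess u z
  simp only [mem_insert_iff, mem_singleton_iff] at h₁ h₂
  rcases h₁ with rfl | rfl <;> rcases h₂ with rfl | rfl
  · simp [scHess]; ring
  · simp [scHess]; ring
  · simp [scHess]; rw [hs]
  · simp [scHess]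
    linear_combination -hl - lap u z * h

lemma abs_hess_sub_le {e : ℂ} (he : ‖e‖ = 1) {u : ℂ → ℝ} {z z' : ℂ} (hu : ContDiffAt ℝ 2 u z)
    (hu' : ContDiffAt ℝ 2 u z')
    {v₁ v₂ : ℂ} (h₁ : v₁ ∈ ({1, I} : Set ℂ)) (h₂ : v₂ ∈ ({1, I} : Set ℂ)) :
    |hess u v₁ v₂ z - hess u v₁ v₂ z'| ≤ |lap u z - lap u z'| + ‖scHess e u z - scHess e u z'‖ := by
  rw [hess_eq_scHess he hu h₁ h₂, hess_eq_scHess he hu' h₁ h₂]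
  have hn : ∀ v ∈ ({1, I} : Set ℂ), ‖v‖ = 1 := by
    rintro v (rfl | rfl) <;> simp
  have h3 : ∀ v ∈ ({1, I} : Set ℂ), |(e * v).im| ≤ 1 := fun v hv =>
    (abs_im_mul_le he v).trans (hn v hv).le
  have h4 : |(e * v₁).im * (e * v₂).im| ≤ 1 := by
    rw [abs_mul]
    exact mul_le_one₀ (h3 _ h₁) (abs_nonneg _) (h3 _ h₂)
  have h5 : |((scHess e u z - scHess e u z') * v₁ * v₂).re| ≤ ‖scHess e u z - scHess e u z'‖ := by
    refine (abs_re_le_norm _).trans ?_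
    rw [norm_mul, norm_mul, hn _ h₁, hn _ h₂, mul_one, mul_one]
  have h6 : lap u z * ((e * v₁).im * (e * v₂).im) + (scHess e u z * v₁ * v₂).re -
      (lap u z' * ((e * v₁).im * (e * v₂).im) + (scHess e u z' * v₁ * v₂).re) =
      (lap u z - lap u z') * ((e * v₁).im * (e * v₂).im) +
      ((scHess e u z - scHess e u z') * v₁ * v₂).re := by
    rw [sub_mul (scHess e u z), sub_mul (scHess e u z * v₁), sub_re]; ring
  rw [h6]
  refine (abs_add_le _ _).trans (add_le_add ?_ h5)
  rw [abs_mul]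
  exact mul_le_of_le_one_right (abs_nonneg _) h4

lemma abs_hess_le {e : ℂ} (he : ‖e‖ = 1) {u : ℂ → ℝ} {z : ℂ} (hu : ContDiffAt ℝ 2 u z)
    {v₁ v₂ : ℂ} (h₁ : v₁ ∈ ({1, I} : Set ℂ)) (h₂ : v₂ ∈ ({1, I} : Set ℂ)) :
    |hess u v₁ v₂ z| ≤ |lap u z| + ‖scHess e u z‖ := by
  rw [hess_eq_scHess he hu h₁ h₂]
  have hn : ∀ v ∈ ({1, I} : Set ℂ), ‖v‖ = 1 := by
    rintro v (rfl | rfl) <;> simp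
  have h3 : ∀ v ∈ ({1, I} : Set ℂ), |(e * v).im| ≤ 1 := fun v hv =>
    (abs_im_mul_le he v).trans (hn v hv).le
  have h4 : |(e * v₁).im * (e * v₂).im| ≤ 1 := by
    rw [abs_mul]
    exact mul_le_one₀ (h3 _ h₁) (abs_nonneg _) (h3 _ h₂)
  have h5 : |(scHess e u z * v₁ * v₂).re| ≤ ‖scHess e u z‖ := by
    refine (abs_re_le_norm _).trans ?_
    rw [norm_mul, norm_mul, hn _ h₁, hn _ h₂, mul_one, mul_one]
  refine (abs_add_le _ _).trans (add_le_add ?_ h5)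
  rw [abs_mul]
  exact mul_le_of_le_one_right (abs_nonneg _) h4

lemma scHess_sub_approx {e : ℂ} (he : ‖e‖ = 1) {u : ℂ → ℝ} {w : ℂ} (hu : ContDiffAt ℝ 2 u w)
    {G : ℂ → ℂ} (hG : Differentiable ℂ G) (f₀ : ℝ) :
    scHess e (fun w => u w - f₀ * halfQuad e w - (G w).re) w =
      scHess e u w - iteratedDeriv 2 G w := by
  have h := re_sq_add_im_sq he
  have hl : lap (fun w => u w - f₀ * halfQuad e w - (G w).re) w = lap u w - f₀ := by
    rw [lap_eq_hess, lap_eq_hess, hess_sub_approx hu hG, hess_sub_approx hu hG]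
    simp [mul_assoc]
    linear_combination - f₀ * h
  apply Complex.ext
  · simp only [scHess, hl, sub_re, hess_sub_approx hu hG]
    simp
    ring
  · simp only [scHess, hl, sub_im, hess_sub_approx hu hG]
    simp
    ring

lemma deriv_quadratic (a b c z : ℂ) :
    deriv (fun w => a + b * (w - z) + c * (w - z) ^ 2) = fun w => b + 2 * c * (w - z) := by
  ext w
  have h : HasDerivAt (fun w => w - z) 1 w := (hasDerivAt_id w).sub_const z
  have := (((h.const_mul b).const_add a).add ((h.pow 2).const_mul c)).deriv
  refine Eq.trans this ?_
  simp; ring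

lemma iteratedDeriv_two_quadratic (a b c z w : ℂ) :
    iteratedDeriv 2 (fun w => a + b * (w - z) + c * (w - z) ^ 2) w = 2 * c := by
  have := congrFun (deriv_quadratic b (2 * c) 0 z) w
  rw [iteratedDeriv_succ, iteratedDeriv_one, deriv_quadratic]
  simp

lemma iteratedDeriv_two_add_affine {G : ℂ → ℂ} (hG : Differentiable ℂ G) (a b z : ℂ) :
    iteratedDeriv 2 (fun w => G w + (a + b * (w - z))) = iteratedDeriv 2 G := by
  ext w
  have h1 : ContDiffAt ℂ 2 G w := hG.contDiff.contDiffAt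
  have h2 : Differentiable ℂ (fun w => a + b * (w - z)) := by fun_prop
  rw [iteratedDeriv_fun_add h1 h2.contDiff.contDiffAt]
  have := iteratedDeriv_two_quadratic a b 0 z w
  simp only [zero_mul, add_zero, mul_zero] at this
  rw [this, add_zero]

lemma exists_taylor_holomorphic {e : ℂ} (he : ‖e‖ = 1) {u : ℂ → ℝ} {z : ℂ}
    (hu : ContDiffAt ℝ 2 u z) : ∃ G, Differentiable ℂ G ∧ iteratedDeriv 2 G z = scHess e u z ∧
      ∀ w, u z + fderiv ℝ u z (w - z) + 1 / 2 * fderiv ℝ (fderiv ℝ u) z (w - z) (w - z) -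
        lap u z * halfQuad e w = (G w).re := by
  set d := (e * z).im with hd
  set a : ℂ := ((u z - lap u z * d ^ 2 / 2 : ℝ) : ℂ)
  set b : ℂ := ⟨fderiv ℝ u z 1, - fderiv ℝ u z I⟩ + I * (lap u z * d : ℝ) * e with hb
  refine ⟨fun w => a + b * (w - z) + scHess e u z / 2 * (w - z) ^ 2, by fun_prop, ?_, fun w => ?_⟩
  · rw [iteratedDeriv_two_quadratic]; ring
  · obtain ⟨h, rfl⟩ : ∃ h, w = z + h := ⟨w - z, by ring⟩
    simp only [add_sub_cancel_left]
    have h0 : h = h.re • (1 : ℂ) + h.im • I := by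
      apply Complex.ext <;> simp
    have h1 : ∀ L : ℂ →L[ℝ] ℝ, L h = h.re * L 1 + h.im * L I := fun L => by
      conv_lhs => rw [h0]
      rw [map_add, map_smul, map_smul, smul_eq_mul, smul_eq_mul]
    have h2 : fderiv ℝ (fderiv ℝ u) z h h = h.re * (h.re * hess u 1 1 z + h.im * hess u 1 I z)
        + h.im * (h.re * hess u 1 I z + h.im * hess u I I z) := by
      rw [h1 (fderiv ℝ (fderiv ℝ u) z h)]
      conv_rhs => rw [hess_symm hu 1 I]
      rw [hess_eq_fderiv_fderiv hu, hess_eq_fderiv_fderiv hu, hess_eq_fderiv_fderiv hu]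
      rw [(hu.isSymmSndFDerivAt (by simp)) h 1, (hu.isSymmSndFDerivAt (by simp)) h I,
        h1 (fderiv ℝ (fderiv ℝ u) z 1), h1 (fderiv ℝ (fderiv ℝ u) z I),
        (hu.isSymmSndFDerivAt (by simp)) 1 I]
    have h3 : (e * (z + h)).im = d + (e * h).im := by rw [mul_add, add_im]
    have h4 : (scHess e u z / 2 * h ^ 2).re = 1 / 2 * ((scHess e u z).re * (h.re ^ 2 - h.im ^ 2)
        - (scHess e u z).im * (2 * h.re * h.im)) := by
      rw [div_mul_eq_mul_div, show (2 : ℂ) = ((2 : ℝ) : ℂ) by simp, div_ofReal_re, mul_re, sq]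
      simp only [mul_re, mul_im]
      ring
    rw [h1 (fderiv ℝ u z), h2]
    have ha : a.re = u z - lap u z * d ^ 2 / 2 := ofReal_re _
    simp only [halfQuad, h3, add_re, h4, ha]
    simp [scHess, hb]
    have hl := lap_eq_hess u z
    have he' := re_sq_add_im_sq he
    linear_combination (-(lap u z * h.im ^ 2 / 2)) * he' + (-(h.im ^ 2 / 2)) * hl


/-- A bound on the open upper half of a ball for the real part of an entire function which is odd
in the bounding line (or for which the ball does not meet that line) holds on the ball. -/
lemma abs_re_le_on_ball {e : ℂ} (he : ‖e‖ = 1) {F : ℂ → ℂ} {z : ℂ} {ρ A : ℝ}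
    (hz : 0 ≤ (e * z).im) (hA : 0 ≤ A)
    (hodd : ρ ≤ (e * z).im ∨ ∀ w, (F (lineReflect e w)).re = - (F w).re)
    (h : ∀ w ∈ ball z ρ, 0 < (e * w).im → |(F w).re| ≤ A) : ∀ w ∈ ball z ρ, |(F w).re| ≤ A := by
  intro w hw
  rcases lt_or_ge 0 (e * w).im with h0 | h0
  · exact h w hw h0
  rcases hodd with hd | ho
  · have h1 := (abs_le.1 (abs_im_sub_le he w z)).1
    have h2 : dist w z < ρ := hw
    linarith
  rcases eq_or_lt_of_le h0 with h1 | h1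
  · have := ho w
    rw [lineReflect_eq_self he h1] at this
    rw [show (F w).re = 0 by linarith, abs_zero]
    exact hA
  · have h2 := h (lineReflect e w) ((dist_lineReflect_le he hz h0).trans_lt hw)
      (by rw [mul_lineReflect he, conj_im]; linarith)
    rwa [ho, abs_neg] at h2

lemma IsApprox.norm_iteratedDeriv_sub_le {e : ℂ} (he : ‖e‖ = 1) {u : ℂ → ℝ} {f₀ : ℝ} {z : ℂ}
    {r η η' : ℝ} {G G' : ℂ → ℂ} (hr : 0 < r) (hz : 0 < (e * z).im) (hη : 0 < η) (hη' : η' ≤ η)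
    (h : IsApprox e u f₀ z r η G) (h' : IsApprox e u f₀ z (r / 2) η' G') {n : ℕ} (hn : n ≠ 0)
    {w : ℂ} (hw : w ∈ closedBall z (r / 8)) :
    ‖iteratedDeriv n G' w - iteratedDeriv n G w‖ ≤
      n.factorial * (16 * r ^ 2 * η) / (r / 8) ^ n := by
  have hd : Differentiable ℂ (fun w => G' w - G w) := h'.diff.sub h.diff
  have hb := abs_re_le_on_ball he (F := fun w => G' w - G w) (z := z) (ρ := r / 2)
    (A := 4 * r ^ 2 * η) hz.le (by positivity) ?_ ?_
  · have := norm_iteratedDeriv_le_of_abs_re_le hd (by positivity : 0 < r / 2)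
      (by positivity) hb hn (w := w) (by rwa [show r / 2 / 4 = r / 8 by ring])
    rw [iteratedDeriv_fun_sub h'.diff.contDiff.contDiffAt h.diff.contDiff.contDiffAt] at this
    refine this.trans (le_of_eq ?_)
    rw [show r / 2 / 4 = r / 8 by ring]
    ring
  · rcases h'.odd with h1 | h1
    · exact Or.inl h1
    · rcases h.odd with h2 | h2
      · left; linarith
      · right; intro w
        simp only [sub_re, h1, h2]; ring
  · intro w hw hw'
    have h1 := h'.le w hw hw'
    have h2 := h.le w (ball_subset_ball (by linarith) hw) hw'
    have h3 : (r / 2) ^ 2 * η' ≤ r ^ 2 / 4 * η := by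
      rw [div_pow]
      have : 0 < r ^ 2 := by positivity
      nlinarith
    have h5 : 0 < r ^ 2 * η := by positivity
    rw [abs_le] at h1 h2 ⊢
    simp only [sub_re]
    constructor <;> nlinarith [h1.1, h1.2, h2.1, h2.2]

lemma IsApprox.norm_sub_scHess_le {e : ℂ} {u : ℂ → ℝ} {z : ℂ} {r η ε : ℝ}
    {G T : ℂ → ℂ} (he : ‖e‖ = 1) (hr : 0 < r) (hz : r ≤ (e * z).im) (hη : 0 < η) (hε : 0 < ε)
    (h : IsApprox e u (lap u z) z r η G) (hT : Differentiable ℂ T)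
    (hTz : iteratedDeriv 2 T z = scHess e u z)
    (hTu : ∀ w ∈ ball z r, |u w - lap u z * halfQuad e w - (T w).re| ≤ r ^ 2 * ε) :
    ‖iteratedDeriv 2 G z - scHess e u z‖ ≤ 128 * (3 * η + ε) := by
  have hd : Differentiable ℂ (fun w => G w - T w) := h.diff.sub hT
  have hb : ∀ w ∈ ball z r, |(G w - T w).re| ≤ r ^ 2 * (3 * η + ε) := by
    intro w hw
    have h2 := (abs_le.1 (abs_im_sub_le he w z)).1
    have h3 : dist w z < r := hw
    have h1 := h.le w hw (by linarith)
    have h4 := hTu w hw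
    rw [abs_le] at h1 h4 ⊢
    simp only [sub_re]
    constructor <;> linarith [h1.1, h1.2, h4.1, h4.2]
  have := norm_iteratedDeriv_le_of_abs_re_le hd hr (by positivity) hb two_ne_zero (w := z)
    (mem_closedBall_self (by positivity))
  rw [iteratedDeriv_fun_sub h.diff.contDiff.contDiffAt hT.contDiff.contDiffAt, hTz] at this
  refine this.trans (le_of_eq ?_)
  rw [Nat.factorial_two]
  field_simp
  norm_num

lemma tendsto_iteratedDeriv_scHess {e : ℂ} {u : ℂ → ℝ} {z : ℂ} (he : ‖e‖ = 1)
    {r : ℝ} {η : ℕ → ℝ} {G : ℕ → ℂ → ℂ} (hr : 0 < r) (hz : 0 < (e * z).im)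
    (hu : ContDiffAt ℝ 2 u z) (hη : ∀ k, 0 < η k) (hη0 : Tendsto η atTop (𝓝 0))
    (hG : ∀ k, IsApprox e u (lap u z) z (r / 2 ^ k) (η k) (G k)) :
    Tendsto (fun k => iteratedDeriv 2 (G k) z) atTop (𝓝 (scHess e u z)) := by
  rw [Metric.tendsto_nhds]
  intro ε hε
  obtain ⟨T, hT, hTz, hTu⟩ := exists_taylor_holomorphic he hu
  have hε' : 0 < ε / 1000 := by positivity
  obtain ⟨δ, hδ, hδu⟩ := taylor_two hu hε'
  have hr0 : Tendsto (fun k : ℕ => r / 2 ^ k) atTop (𝓝 0) := by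
    have := (tendsto_pow_atTop_nhds_zero_of_lt_one (by norm_num : (0 : ℝ) ≤ 1 / 2)
      (by norm_num)).const_mul r
    simpa [div_eq_mul_inv] using this
  filter_upwards [hr0.eventually (gt_mem_nhds hz), hr0.eventually (gt_mem_nhds hδ),
    hη0.eventually (gt_mem_nhds hε')] with k h1 h2 h3
  have hrk : 0 < r / 2 ^ k := by positivity
  have := (hG k).norm_sub_scHess_le he hrk h1.le (hη k) hε' hT hTz (fun w hw => by
    rw [← hTu, show ∀ a b c : ℝ, a - c - (b - c) = a - b by intros; ring]
    refine (hδu w (ball_subset_ball h2.le hw)).trans ?_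
    rw [mul_comm]
    have h5 : ‖w - z‖ < r / 2 ^ k := by rw [← dist_eq_norm]; exact hw
    gcongr)
  rw [dist_eq_norm]
  refine this.trans_lt ?_
  linarith

lemma norm_sub_le_of_tendsto {a : ℕ → ℂ} {L : ℂ} {c : ℕ → ℝ} {E : ℝ} (ha : Tendsto a atTop (𝓝 L))
    (hc : ∀ k, ‖a (k + 1) - a k‖ ≤ c k) {k : ℕ}
    (hE : ∀ n, ∑ j ∈ Finset.range n, c (k + j) ≤ E) : ‖L - a k‖ ≤ E := by
  have h1 : ∀ n, ‖a (k + n) - a k‖ ≤ E := fun n => by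
    refine le_trans ?_ (hE n)
    induction n with
    | zero => simp
    | succ n ih =>
      rw [Finset.sum_range_succ]
      have := norm_add_le (a (k + n + 1) - a (k + n)) (a (k + n) - a k)
      rw [sub_add_sub_cancel] at this
      exact this.trans (by linarith [hc (k + n)])
  have h2 : Tendsto (fun n => a (k + n)) atTop (𝓝 L) := by
    have := (tendsto_add_atTop_iff_nat k).2 ha
    simpa [add_comm] using this
  exact le_of_tendsto (h2.sub_const _).norm (Eventually.of_forall h1)

lemma IsHalfSol.exists_chain {e : ℂ} (he : ‖e‖ = 1) {u f : ℂ → ℝ} {z : ℂ} {r f₀ : ℝ}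
    (hr : 0 < r) (hz : 0 < (e * z).im) (h : IsHalfSol e u f z (4 * r)) {η : ℕ → ℝ}
    (hη : ∀ k, 0 < η k)
    (hf : ∀ k, ∀ w ∈ ball z (4 * (r / 2 ^ k)), 0 < (e * w).im → |f w - f₀| ≤ η k) :
    ∃ G : ℕ → ℂ → ℂ, ∀ k, IsApprox e u f₀ z (r / 2 ^ k) (η k) (G k) := by
  have : ∀ k, ∃ G, IsApprox e u f₀ z (r / 2 ^ k) (η k) G := fun k => by
    have hk : r / 2 ^ k ≤ r := div_le_self hr.le (one_le_pow₀ (by norm_num))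
    exact (h.mono (ball_subset_ball (by linarith))).exists_isApprox he (by positivity) hz (hη k)
      (hf k)
  choose G hG using this
  exact ⟨G, hG⟩

lemma IsApprox.norm_iteratedDeriv_le {e : ℂ} (he : ‖e‖ = 1) {u : ℂ → ℝ} {f₀ : ℝ} {z : ℂ}
    {r η A : ℝ} {G : ℂ → ℂ} (hr : 0 < r) (hz : 0 < (e * z).im) (hη : 0 < η) (hA : 0 ≤ A)
    (h : IsApprox e u f₀ z r η G)
    (hu : ∀ w ∈ ball z r, 0 < (e * w).im → |u w| ≤ A * r ^ 2)
    {w : ℂ} (hw : w ∈ closedBall z (r / 4)) :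
    ‖iteratedDeriv 2 G w‖ ≤ 128 * (A + 2 * |f₀| + 3 * η) ∧
    ‖iteratedDeriv 3 G w‖ ≤ 1536 * (A + 2 * |f₀| + 3 * η) / r := by
  obtain ⟨F, hF, hF2, hFb⟩ : ∃ F, Differentiable ℂ F ∧ iteratedDeriv 2 F = iteratedDeriv 2 G ∧
      ∀ w ∈ ball z r, |(F w).re| ≤ (A + 2 * |f₀| + 3 * η) * r ^ 2 := by
    have hr2 : 0 < r ^ 2 := by positivity
    rcases le_or_gt r (e * z).im with hd | hd
    · set d := (e * z).im
      refine ⟨fun w => G w + ((f₀ * d ^ 2 / 2 : ℝ) + (-(I * (f₀ * d : ℝ) * e)) * (w - z)),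
        h.diff.add (by fun_prop), iteratedDeriv_two_add_affine h.diff _ _ _, fun w hw => ?_⟩
      have h2 := (abs_le.1 (abs_im_sub_le he w z)).1
      have h3 : dist w z < r := hw
      have hw' : 0 < (e * w).im := by linarith
      have h4 := h.le w hw hw'
      have h5 := hu w hw hw'
      have hx : |(e * (w - z)).im| ≤ r := by
        refine (abs_im_mul_le he _).trans ?_
        rw [← dist_eq_norm]; exact h3.le
      set x := (e * (w - z)).im with hxdef
      have hwx : (e * w).im = d + x := by
        rw [hxdef, mul_sub, sub_im]; ring
      have hre : (G w + ((f₀ * d ^ 2 / 2 : ℝ) + (-(I * (f₀ * d : ℝ) * e)) * (w - z))).re =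
          (G w).re + f₀ * halfQuad e w - f₀ * (x ^ 2 / 2) := by
        have h6 : ((-(I * (f₀ * d : ℝ) * e)) * (w - z)).re = f₀ * d * x := by
          rw [show (-(I * (f₀ * d : ℝ) * e)) * (w - z) = -I * ((f₀ * d : ℝ) * (e * (w - z))) by
            ring, hxdef]
          simp only [neg_mul, neg_re, I_mul_re, neg_neg, im_ofReal_mul]
        rw [add_re, add_re, h6, ofReal_re, halfQuad, hwx]
        ring
      have h7 : |f₀ * (x ^ 2 / 2)| ≤ 2 * |f₀| * r ^ 2 := by
        rw [abs_mul, abs_of_nonneg (by positivity : 0 ≤ x ^ 2 / 2)]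
        have : x ^ 2 ≤ r ^ 2 := sq_le_sq' (abs_le.1 hx).1 (abs_le.1 hx).2
        nlinarith [abs_nonneg f₀]
      change |(G w + ((f₀ * d ^ 2 / 2 : ℝ) + (-(I * (f₀ * d : ℝ) * e)) * (w - z))).re| ≤ _
      rw [hre]
      rw [abs_le] at h4 h5 h7 ⊢
      constructor <;> nlinarith [h4.1, h4.2, h5.1, h5.2, h7.1, h7.2]
    · have ho := h.odd.resolve_left hd.not_ge
      refine ⟨G, h.diff, rfl, abs_re_le_on_ball he hz.le (by positivity) (Or.inr ho)
        fun w hw hw' => ?_⟩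
      have h4 := h.le w hw hw'
      have h5 := hu w hw hw'
      have h2 := (abs_le.1 (abs_im_sub_le he w z)).2
      have h3 : dist w z < r := hw
      have h7 : |f₀ * halfQuad e w| ≤ 2 * |f₀| * r ^ 2 := by
        rw [abs_mul, halfQuad,
          abs_of_nonneg (by positivity : 0 ≤ 1 / 2 * ((e * w).im * (e * w).im))]
        have : (e * w).im * (e * w).im ≤ 2 * r * (2 * r) := by
          gcongr <;> linarith
        nlinarith [abs_nonneg f₀]
      rw [abs_le] at h4 h5 h7 ⊢
      constructor <;> nlinarith [h4.1, h4.2, h5.1, h5.2, h7.1, h7.2]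
  have hK : 0 < (A + 2 * |f₀| + 3 * η) * r ^ 2 := by positivity
  have h2 := norm_iteratedDeriv_le_of_abs_re_le hF hr hK hFb two_ne_zero hw
  have h3 := norm_iteratedDeriv_le_of_abs_re_le hF hr hK hFb three_ne_zero hw
  rw [hF2] at h2
  rw [iteratedDeriv_succ, hF2, ← iteratedDeriv_succ] at h3
  refine ⟨h2.trans (le_of_eq ?_), h3.trans (le_of_eq ?_)⟩
  · rw [Nat.factorial_two]; field_simp; norm_num
  · rw [show Nat.factorial 3 = 6 by rfl]; field_simp; norm_num

lemma norm_scHess_le {e : ℂ} (he : ‖e‖ = 1) {u f : ℂ → ℝ} {z : ℂ} {r A E : ℝ}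
    (hr : 0 < r) (hz : 0 < (e * z).im) (h : IsHalfSol e u f z (4 * r)) (hA : 0 ≤ A)
    (hu : ∀ w ∈ ball z r, 0 < (e * w).im → |u w| ≤ A * r ^ 2) {η : ℕ → ℝ}
    (hη : ∀ k, 0 < η k) (hη0 : Tendsto η atTop (𝓝 0)) (hηa : Antitone η)
    (hf : ∀ k, ∀ w ∈ ball z (4 * (r / 2 ^ k)), 0 < (e * w).im → |f w - f z| ≤ η k)
    (hE : ∀ n, ∑ j ∈ Finset.range n, η j ≤ E) :
    ‖scHess e u z‖ ≤ 3000 * (A + |f z| + E) := by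
  have hz4 : z ∈ ball z (4 * r) := mem_ball_self (by positivity)
  have hl : lap u z = f z := h.lap_eq z hz4 hz
  obtain ⟨G, hG⟩ := h.exists_chain he hr hz hη hf
  have ht := tendsto_iteratedDeriv_scHess he hr hz (h.contDiffAt hz4 hz) hη hη0 (by rwa [hl])
  have h1 : ‖scHess e u z - iteratedDeriv 2 (G 0) z‖ ≤ 2048 * E := by
    refine norm_sub_le_of_tendsto (c := fun k => 2048 * η k) ht (fun k => ?_) (fun n => ?_)
    · have hrk : 0 < r / 2 ^ k := by positivity
      have hG' := hG (k + 1)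
      rw [pow_succ, ← div_div] at hG'
      have := (hG k).norm_iteratedDeriv_sub_le he hrk hz (hη k) (hηa k.le_succ) hG' two_ne_zero
        (w := z) (mem_closedBall_self (by positivity))
      refine this.trans (le_of_eq ?_)
      rw [Nat.factorial_two]; field_simp; norm_num; ring
    · rw [← Finset.mul_sum]
      simpa using mul_le_mul_of_nonneg_left (hE n) (by norm_num : (0 : ℝ) ≤ 2048)
  have h0 := hG 0
  rw [pow_zero, div_one] at h0
  have h2 := (h0.norm_iteratedDeriv_le he hr hz (hη 0) hA hu (w := z)
    (mem_closedBall_self (by positivity))).1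
  have h3 : η 0 ≤ E := by simpa using hE 1
  have h4 := norm_add_le (scHess e u z - iteratedDeriv 2 (G 0) z) (iteratedDeriv 2 (G 0) z)
  rw [sub_add_cancel] at h4
  have h5 := abs_nonneg (f z)
  have h6 := hη 0
  linarith

lemma sum_geometric_le {l : ℝ} (hl : 0 < l) (hl1 : l < 1) (n : ℕ) :
    ∑ j ∈ Finset.range n, l ^ j ≤ (1 - l)⁻¹ := by
  rw [← tsum_geometric_of_lt_one hl.le hl1]
  exact (summable_geometric_of_lt_one hl.le hl1).sum_le_tsum _ fun _ _ => by positivity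

lemma sum_min_geometric_le {l M N : ℝ} (hl : 0 < l) (hl1 : l < 1) (hM : 0 < M) (hN : 0 < N)
    (n : ℕ) : ∑ j ∈ Finset.range n, min (2 * M) (N * l ^ j) ≤
      (2 / Real.log l⁻¹ + 2 + (1 - l)⁻¹) * (M * (1 + Real.log (1 + N / M))) := by
  have hL : 0 < Real.log l⁻¹ := Real.log_pos ((one_lt_inv₀ hl).2 hl1)
  have hx : 0 < N / M := by positivity
  have hX : 0 < Real.log (1 + N / M) := Real.log_pos (by linarith)
  set X := Real.log (1 + N / M) with hXdef
  set K := ⌈X / Real.log l⁻¹⌉₊ with hK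
  have hK1 : (K : ℝ) < X / Real.log l⁻¹ + 1 := Nat.ceil_lt_add_one (by positivity)
  have hK2 : X / Real.log l⁻¹ ≤ K := Nat.le_ceil _
  have hlK : N * l ^ K ≤ M := by
    have h1 : 1 + N / M ≤ (l⁻¹) ^ K := by
      rw [← Real.log_le_log_iff (by positivity) (by positivity), Real.log_pow]
      rwa [div_le_iff₀ hL] at hK2
    have h2 : (1 + N / M) * l ^ K ≤ 1 := by
      rw [inv_pow, ← one_div, le_div_iff₀ (by positivity)] at h1
      exact h1
    have h3 : 0 < l ^ K := by positivity
    have h4 : N / M * l ^ K ≤ 1 := by linarith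
    rw [div_mul_eq_mul_div, div_le_one hM] at h4
    exact h4
  have h1 : ∑ j ∈ Finset.range n, min (2 * M) (N * l ^ j) ≤
      ∑ j ∈ Finset.range (K + n), min (2 * M) (N * l ^ j) :=
    Finset.sum_le_sum_of_subset_of_nonneg (Finset.range_subset_range.2 (by omega))
      fun _ _ _ => by positivity
  have h2 : ∑ j ∈ Finset.range K, min (2 * M) (N * l ^ j) ≤ K * (2 * M) := by
    refine (Finset.sum_le_sum fun j _ => min_le_left (2 * M) (N * l ^ j)).trans ?_
    simp
  have h3 : ∑ j ∈ Finset.range n, min (2 * M) (N * l ^ (K + j)) ≤ M * (1 - l)⁻¹ := by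
    refine (Finset.sum_le_sum fun j _ => (min_le_right (2 * M) (N * l ^ (K + j))).trans
      (?_ : _ ≤ M * l ^ j)).trans ?_
    · rw [pow_add, ← mul_assoc]
      gcongr
    · rw [← Finset.mul_sum]
      exact mul_le_mul_of_nonneg_left (sum_geometric_le hl hl1 n) hM.le
  rw [Finset.sum_range_add] at h1
  have h4 : 0 < (1 - l)⁻¹ := inv_pos.2 (by linarith)
  have h5 : X / Real.log l⁻¹ = 1 / Real.log l⁻¹ * X := by ring
  have h6 : (2 : ℝ) / Real.log l⁻¹ = 2 * (1 / Real.log l⁻¹) := by ring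
  rw [h5] at hK1
  rw [h6]
  have h7 : 0 < 1 / Real.log l⁻¹ := by positivity
  set c := 1 / Real.log l⁻¹
  set κ := (1 - l)⁻¹
  have h8 : (K : ℝ) * (2 * M) ≤ (c * X + 1) * (2 * M) := by gcongr
  have h9 : 0 < M * X := by positivity
  have h10 : 0 < c * M := by positivity
  have h11 : 0 < κ * (M * X) := by positivity
  nlinarith

lemma half_rpow_pow (α : ℝ) (k : ℕ) : ((1 / 2 : ℝ) ^ α) ^ k = (1 / 2 ^ k : ℝ) ^ α := by
  rw [← Real.rpow_natCast, ← Real.rpow_mul (by norm_num), mul_comm, Real.rpow_mul (by norm_num),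
    Real.rpow_natCast, div_pow, one_pow]

lemma half_rpow_lt_one {α : ℝ} (hα : 0 < α) : (1 / 2 : ℝ) ^ α < 1 :=
  Real.rpow_lt_one (by norm_num) (by norm_num) hα

lemma exists_norm_scHess_le_log {α : ℝ} (hα : 0 < α) : ∃ C > 0, ∀ {e : ℂ} {u f : ℂ → ℝ} {z : ℂ}
    {r A M N : ℝ}, ‖e‖ = 1 → 0 < r → 0 < (e * z).im → IsHalfSol e u f z (4 * r) → 0 ≤ A →
    0 < M → 0 < N → (∀ w ∈ ball z r, 0 < (e * w).im → |u w| ≤ A * r ^ 2) →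
    (∀ w ∈ ball z (4 * r), 0 < (e * w).im → |f w| ≤ M) →
    (∀ w ∈ ball z (4 * r), 0 < (e * w).im → |f w - f z| ≤ N * (dist w z / (4 * r)) ^ α) →
    ‖scHess e u z‖ ≤ C * (A + M * (1 + Real.log (1 + N / M))) := by
  set l : ℝ := (1 / 2 : ℝ) ^ α with hl
  have hl0 : 0 < l := by positivity
  have hl1 : l < 1 := half_rpow_lt_one hα
  have hL : 0 < Real.log l⁻¹ := Real.log_pos ((one_lt_inv₀ hl0).2 hl1)
  have hκ : 0 < (1 - l)⁻¹ := inv_pos.2 (by linarith)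
  refine ⟨3000 * (1 + (2 / Real.log l⁻¹ + 2 + (1 - l)⁻¹)), by positivity, ?_⟩
  intro e u f z r A M N he hr hz h hA hM hN hu hfM hfN
  have hz4 : z ∈ ball z (4 * r) := mem_ball_self (by positivity)
  have hpow : Tendsto (fun k : ℕ => N * l ^ k) atTop (𝓝 0) := by
    simpa using (tendsto_pow_atTop_nhds_zero_of_lt_one hl0.le hl1).const_mul N
  have := norm_scHess_le he hr hz h hA hu (η := fun k => min (2 * M) (N * l ^ k))
    (fun k => by positivity)
    (squeeze_zero (fun k => by positivity) (fun k => min_le_right _ _) hpow)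
    (fun i j hij => min_le_min_left _ (mul_le_mul_of_nonneg_left
      (pow_le_pow_of_le_one hl0.le hl1.le hij) hN.le)) ?_
    (sum_min_geometric_le hl0 hl1 hM hN)
  · have h1 := hfM z hz4 hz
    have hx : 0 < N / M := by positivity
    have hX : 0 < Real.log (1 + N / M) := Real.log_pos (by linarith)
    refine this.trans ?_
    have h2 : 0 < M * Real.log (1 + N / M) := by positivity
    have h3 : 0 < 2 / Real.log l⁻¹ := by positivity
    set c := 2 / Real.log l⁻¹ + 2 + (1 - l)⁻¹ with hc
    have h4 : 0 < c := by positivity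
    nlinarith [mul_nonneg h4.le hA]
  · intro k w hw hw'
    have h2 : dist w z < 4 * (r / 2 ^ k) := hw
    have hk : r / 2 ^ k ≤ r := div_le_self hr.le (one_le_pow₀ (by norm_num))
    have hw4 : w ∈ ball z (4 * r) := by rw [mem_ball]; linarith
    refine le_min ?_ ?_
    · refine (abs_sub _ _).trans ?_
      linarith [hfM w hw4 hw', hfM z hz4 hz]
    · refine (hfN w hw4 hw').trans ?_
      have h3 : dist w z / (4 * r) ≤ 1 / 2 ^ k := by
        rw [div_le_div_iff₀ (by positivity) (by positivity)]
        rw [mul_div_assoc', lt_div_iff₀ (by positivity)] at h2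
        linarith
      rw [hl, half_rpow_pow]
      gcongr

lemma norm_iteratedDeriv_three_chain_le {e : ℂ} (he : ‖e‖ = 1) {u : ℂ → ℝ} {f₀ : ℝ} {z : ℂ}
    {r A N l : ℝ} {G : ℕ → ℂ → ℂ} (hr : 0 < r) (hz : 0 < (e * z).im) (hA : 0 ≤ A) (hN : 0 < N)
    (hl : 1 / 2 < l) (hl1 : l < 1)
    (hG : ∀ k, IsApprox e u f₀ z (r / 2 ^ k) (N * l ^ k) (G k))
    (hu : ∀ w ∈ ball z r, 0 < (e * w).im → |u w| ≤ A * r ^ 2) (k : ℕ) {w : ℂ}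
    (hw : w ∈ closedBall z (r / 2 ^ k / 8)) :
    ‖iteratedDeriv 3 (G k) w‖ ≤
      (4608 + 49152 * (2 * l - 1)⁻¹) * (A + |f₀| + N) * (2 * l) ^ k / r := by
  have hl0 : 0 < l := by linarith
  have hm : 0 < 2 * l - 1 := by linarith
  have hc : 0 < A + |f₀| + N := by positivity
  suffices h : ‖iteratedDeriv 3 (G k) w‖ ≤ 4608 * (A + |f₀| + N) / r +
      49152 * (2 * l - 1)⁻¹ * (A + |f₀| + N) * ((2 * l) ^ k - 1) / r by
    refine h.trans ?_
    have h1 : 1 ≤ (2 * l) ^ k := one_le_pow₀ (by linarith)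
    rw [← add_div]
    gcongr
    have h2 : 0 < 49152 * (2 * l - 1)⁻¹ * (A + |f₀| + N) := by positivity
    nlinarith
  induction k with
  | zero =>
    have h0 := hG 0
    rw [pow_zero, div_one] at h0 hw
    have h1 : w ∈ closedBall z (r / 4) := closedBall_subset_closedBall (by linarith) hw
    have h2 := (h0.norm_iteratedDeriv_le he hr hz (by positivity) hA hu h1).2
    refine h2.trans ?_
    simp only [pow_zero, mul_one, sub_self, mul_zero, zero_div, add_zero]
    refine div_le_div_of_nonneg_right ?_ hr.le
    have := abs_nonneg f₀
    linarith
  | succ k ih =>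
    have hrk : 0 < r / 2 ^ k := by positivity
    have hG' := hG (k + 1)
    rw [pow_succ, ← div_div] at hG' hw
    have hw' : w ∈ closedBall z (r / 2 ^ k / 8) :=
      closedBall_subset_closedBall (by linarith) hw
    have h1 := (hG k).norm_iteratedDeriv_sub_le he hrk hz (by positivity)
      (mul_le_mul_of_nonneg_left (pow_le_pow_of_le_one hl0.le hl1.le k.le_succ) hN.le)
      hG' three_ne_zero hw'
    have h2 : (Nat.factorial 3 : ℝ) * (16 * (r / 2 ^ k) ^ 2 * (N * l ^ k)) / (r / 2 ^ k / 8) ^ 3 =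
        49152 * N * (2 * l) ^ k / r := by
      rw [show Nat.factorial 3 = 6 by rfl, mul_pow]; field_simp; norm_num
    rw [h2] at h1
    have h3 := norm_add_le (iteratedDeriv 3 (G (k + 1)) w - iteratedDeriv 3 (G k) w)
      (iteratedDeriv 3 (G k) w)
    rw [sub_add_cancel] at h3
    have h4 := ih hw'
    have h5 : 49152 * (2 * l - 1)⁻¹ * (A + |f₀| + N) * ((2 * l) ^ (k + 1) - 1) / r =
        49152 * (2 * l - 1)⁻¹ * (A + |f₀| + N) * ((2 * l) ^ k - 1) / r +
        49152 * (A + |f₀| + N) * (2 * l) ^ k / r := by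
      rw [pow_succ]; field_simp; ring
    have h6 : 49152 * N * (2 * l) ^ k / r ≤ 49152 * (A + |f₀| + N) * (2 * l) ^ k / r := by
      gcongr
      have := abs_nonneg f₀
      linarith
    rw [h5]
    linarith

lemma norm_sub_le_of_norm_deriv_le_closedBall {F : ℂ → ℂ} (hF : Differentiable ℂ F) {z w : ℂ}
    {ρ B : ℝ} (hw : dist z w ≤ ρ) (h : ∀ y ∈ closedBall z ρ, ‖deriv F y‖ ≤ B) :
    ‖F z - F w‖ ≤ B * dist z w := by
  rw [dist_eq_norm]
  exact (convex_closedBall z ρ).norm_image_sub_le_of_norm_deriv_le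
    (fun y _ => hF.differentiableAt) h (by rw [mem_closedBall, dist_comm]; exact hw)
    (mem_closedBall_self (dist_nonneg.trans hw))

lemma exists_norm_scHess_sub_le {α : ℝ} (hα : 0 < α) (hα1 : α < 1) : ∃ C > 0,
    ∀ {e : ℂ} {u f : ℂ → ℝ} {z z' : ℂ}
    {r A M N : ℝ}, ‖e‖ = 1 → 0 < r → 0 < (e * z).im → IsHalfSol e u f z (4 * r) → 0 ≤ A →
    0 ≤ M → 0 < N → (∀ w ∈ ball z r, 0 < (e * w).im → |u w| ≤ A * r ^ 2) → |f z| ≤ M →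
    (∀ w ∈ ball z (4 * r), 0 < (e * w).im → ∀ w' ∈ ball z (4 * r), 0 < (e * w').im →
      |f w - f w'| ≤ N * (dist w w' / (4 * r)) ^ α) →
    z' ∈ ball z (r / 16) → 0 < (e * z').im →
    ‖scHess e u z - scHess e u z'‖ ≤ C * (A + M + N) * (dist z z' / r) ^ α := by
  set l : ℝ := (1 / 2 : ℝ) ^ α with hl
  have hl0 : 0 < l := by positivity
  have hl1 : l < 1 := half_rpow_lt_one hα
  have hl2 : 1 / 2 < l := by
    have := Real.rpow_lt_rpow_of_exponent_gt (by norm_num : (0 : ℝ) < 1 / 2) (by norm_num) hα1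
    rwa [Real.rpow_one] at this
  have hκ : 0 < (1 - l)⁻¹ := inv_pos.2 (by linarith)
  have hν : 0 < (2 * l - 1)⁻¹ := inv_pos.2 (by linarith)
  set D := 4608 + 49152 * (2 * l - 1)⁻¹ with hD
  have hD0 : 0 < D := by positivity
  refine ⟨16 * (2048 * (1 - l)⁻¹ + D + 3000 * (193 + (1 - l)⁻¹)), by positivity, ?_⟩
  intro e u f z z' r A M N he hr hz h hA hM hN hu hfM hfN hzz' hz'
  rcases eq_or_ne z z' with rfl | hne
  · rw [sub_self, norm_zero]; positivity
  set t := dist z z' with ht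
  have ht0 : 0 < t := dist_pos.2 hne
  have htr : t < r / 16 := by rw [ht, dist_comm]; exact hzz'
  obtain ⟨k, hk1, hk2⟩ := exists_nat_pow_near (x := r / (8 * t)) (y := 2)
    (by rw [le_div_iff₀ (by positivity)]; linarith) (by norm_num)
  rw [le_div_iff₀ (by positivity)] at hk1
  rw [div_lt_iff₀ (by positivity)] at hk2
  have hrk : 0 < r / 2 ^ k := by positivity
  have htk : t ≤ r / 2 ^ k / 8 := by
    rw [div_div, le_div_iff₀ (by positivity)]; linarith
  have hlk : l ^ k ≤ 16 * (t / r) ^ α := by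
    rw [hl, half_rpow_pow]
    have h1 : (1 : ℝ) / 2 ^ k ≤ 16 * (t / r) := by
      rw [mul_div_assoc', div_le_div_iff₀ (by positivity) hr]
      rw [pow_succ] at hk2
      linarith
    have h2 : (16 : ℝ) ^ α ≤ 16 := by
      have := Real.rpow_le_rpow_of_exponent_le (by norm_num : (1 : ℝ) ≤ 16) hα1.le
      rwa [Real.rpow_one] at this
    calc (1 / 2 ^ k : ℝ) ^ α ≤ (16 * (t / r)) ^ α := by gcongr
      _ = 16 ^ α * (t / r) ^ α := Real.mul_rpow (by norm_num) (by positivity)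
      _ ≤ _ := by gcongr
  have hz4 : z ∈ ball z (4 * r) := mem_ball_self (by positivity)
  have hpow : Tendsto (fun k : ℕ => N * l ^ k) atTop (𝓝 0) := by
    simpa using (tendsto_pow_atTop_nhds_zero_of_lt_one hl0.le hl1).const_mul N
  have hle : ∀ j : ℕ, ∀ w ∈ ball z (4 * (r / 2 ^ j)), w ∈ ball z (4 * r) := fun j w hw => by
    have h2 : dist w z < 4 * (r / 2 ^ j) := hw
    have hj : r / 2 ^ j ≤ r := div_le_self hr.le (one_le_pow₀ (by norm_num))
    rw [mem_ball]; linarith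
  have hfdist : ∀ j : ℕ, ∀ w ∈ ball z (4 * r), 0 < (e * w).im → ∀ w' ∈ ball z (4 * r),
      0 < (e * w').im → dist w w' ≤ 4 * (r / 2 ^ j) → |f w - f w'| ≤ N * l ^ j := by
    intro j w hw hw0 w' hw' hw0' hd
    refine (hfN w hw hw0 w' hw' hw0').trans ?_
    have h3 : dist w w' / (4 * r) ≤ 1 / 2 ^ j := by
      rw [div_le_div_iff₀ (by positivity) (by positivity)]
      rw [mul_div_assoc', le_div_iff₀ (by positivity)] at hd
      linarith
    rw [hl, half_rpow_pow]
    gcongr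
  obtain ⟨G, hG⟩ := h.exists_chain he hr hz (η := fun k => N * l ^ k) (fun k => by positivity)
    (fun j w hw hw' => hfdist j w (hle j w hw) hw' z hz4 hz (mem_ball.1 hw).le)
  have hlap : lap u z = f z := h.lap_eq z hz4 hz
  have hlim := tendsto_iteratedDeriv_scHess he hr hz (h.contDiffAt hz4 hz)
    (fun k => by positivity) hpow (by rwa [hlap])
  have hsum : ∀ k n, ∑ j ∈ Finset.range n, N * l ^ (k + j) ≤ N * l ^ k * (1 - l)⁻¹ := by
    intro k n
    simp_rw [pow_add, ← mul_assoc]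
    rw [← Finset.mul_sum]
    exact mul_le_mul_of_nonneg_left (sum_geometric_le hl0 hl1 n) (by positivity)
  have h1 : ‖scHess e u z - iteratedDeriv 2 (G k) z‖ ≤ 2048 * (N * l ^ k * (1 - l)⁻¹) := by
    refine norm_sub_le_of_tendsto (c := fun k => 2048 * (N * l ^ k)) hlim (fun k => ?_)
      (fun n => ?_)
    · have hrk : 0 < r / 2 ^ k := by positivity
      have hG' := hG (k + 1)
      rw [pow_succ, ← div_div] at hG'
      have := (hG k).norm_iteratedDeriv_sub_le he hrk hz (by positivity)
        (mul_le_mul_of_nonneg_left (pow_le_pow_of_le_one hl0.le hl1.le k.le_succ) hN.le)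
        hG' two_ne_zero (w := z) (mem_closedBall_self (by positivity))
      refine this.trans (le_of_eq ?_)
      rw [Nat.factorial_two]; field_simp; norm_num
    · rw [← Finset.mul_sum]
      exact mul_le_mul_of_nonneg_left (hsum k n) (by norm_num : (0 : ℝ) ≤ 2048)
  have hS : 0 < A + M + N := by positivity
  have h2 : ‖iteratedDeriv 2 (G k) z - iteratedDeriv 2 (G k) z'‖ ≤ D * (A + M + N) * l ^ k := by
    have hb : ∀ y ∈ closedBall z (r / 2 ^ k / 8), ‖deriv (iteratedDeriv 2 (G k)) y‖ ≤
        D * (A + M + N) * (2 * l) ^ k / r := by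
      intro y hy
      rw [← iteratedDeriv_succ]
      refine (norm_iteratedDeriv_three_chain_le he hr hz hA hN hl2 hl1 hG hu k hy).trans ?_
      gcongr
    have hd : Differentiable ℂ (iteratedDeriv 2 (G k)) :=
      (hG k).diff.contDiff.differentiable_iteratedDeriv (n := 3) 2
        (by exact_mod_cast (by norm_num : (2 : ℕ) < 3))
    refine (norm_sub_le_of_norm_deriv_le_closedBall hd htk hb).trans ?_
    have h3 : D * (A + M + N) * (2 * l) ^ k / r * t ≤
        D * (A + M + N) * (2 * l) ^ k / r * (r / 2 ^ k / 8) := by gcongr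
    refine h3.trans ?_
    have h4 : D * (A + M + N) * (2 * l) ^ k / r * (r / 2 ^ k / 8) =
        D * (A + M + N) * l ^ k / 8 := by
      rw [mul_pow]; field_simp
    rw [h4]
    have : 0 < D * (A + M + N) * l ^ k := by positivity
    linarith
  have h3 : ‖scHess e u z' - iteratedDeriv 2 (G k) z'‖ ≤
      3000 * (192 * (N * l ^ k) + N * l ^ k + N * l ^ k * (1 - l)⁻¹) := by
    have hsub4 : ball z (r / 2 ^ k) ⊆ ball z (4 * r) := fun w hw =>
      hle k w (ball_subset_ball (by linarith) hw)
    have hz'k : z' ∈ ball z (r / 2 ^ k) := by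
      rw [mem_ball, dist_comm]; linarith
    have hz'4 := hsub4 hz'k
    have hv := ((h.mono hsub4).sub_approx he (hG k).diff (hG k).odd (f z))
    have hsub : ball z' (4 * (r / 2 ^ k / 8)) ⊆ ball z (r / 2 ^ k) := by
      refine ball_subset_ball' ?_
      rw [dist_comm]; linarith
    have hv' := hv.mono hsub
    have hrk8 : 0 < r / 2 ^ k / 8 := by positivity
    have := norm_scHess_le he hrk8 hz' hv' (A := 192 * (N * l ^ k))
      (E := N * l ^ k * (1 - l)⁻¹) (by positivity) (fun w hw hw' => ?_)
      (η := fun j => N * l ^ (k + j)) (fun j => by positivity)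
      (by simpa [add_comm] using (tendsto_add_atTop_iff_nat k).2 hpow)
      (fun i j hij => mul_le_mul_of_nonneg_left
        (pow_le_pow_of_le_one hl0.le hl1.le (by omega)) hN.le)
      (fun j w hw hw' => ?_) (hsum k)
    · rw [scHess_sub_approx he (h.contDiffAt hz'4 hz') (hG k).diff] at this
      refine this.trans ?_
      have h5 := hfdist k z' hz'4 hz' z hz4 hz (by rw [dist_comm]; linarith)
      linarith
    · refine ((hG k).le w (hsub (ball_subset_ball (by linarith) hw)) hw').trans (le_of_eq ?_)
      ring
    · have hk8 : r / 2 ^ k / 8 / 2 ^ j ≤ r / 2 ^ k / 8 :=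
        div_le_self hrk8.le (one_le_pow₀ (by norm_num))
      have hw4 := hsub4 (hsub (ball_subset_ball (by linarith) hw))
      have h6 := hfdist (k + j) w hw4 hw' z' hz'4 hz' (by
        have h7 : dist w z' < 4 * (r / 2 ^ k / 8 / 2 ^ j) := hw
        have h8 : r / 2 ^ (k + j) = 8 * (r / 2 ^ k / 8 / 2 ^ j) := by
          rw [pow_add]; field_simp
        have h9 : 0 < r / 2 ^ k / 8 / 2 ^ j := by positivity
        rw [h8]; linarith)
      rwa [show f w - f z - (f z' - f z) = f w - f z' by ring]
  have h4 : scHess e u z - scHess e u z' = (scHess e u z - iteratedDeriv 2 (G k) z) +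
      (iteratedDeriv 2 (G k) z - iteratedDeriv 2 (G k) z') -
      (scHess e u z' - iteratedDeriv 2 (G k) z') := by ring
  have h5 : ‖scHess e u z - scHess e u z'‖ ≤ 2048 * (N * l ^ k * (1 - l)⁻¹) +
      D * (A + M + N) * l ^ k +
      3000 * (192 * (N * l ^ k) + N * l ^ k + N * l ^ k * (1 - l)⁻¹) := by
    rw [h4]
    refine (norm_sub_le _ _).trans (add_le_add ((norm_add_le _ _).trans (add_le_add h1 h2)) h3)
  refine h5.trans ?_
  have hNS : N ≤ A + M + N := by linarith
  calc _ ≤ 2048 * ((A + M + N) * l ^ k * (1 - l)⁻¹) +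
      D * (A + M + N) * l ^ k + 3000 * (192 * ((A + M + N) * l ^ k) + (A + M + N) * l ^ k +
        (A + M + N) * l ^ k * (1 - l)⁻¹) := by gcongr
    _ = (2048 * (1 - l)⁻¹ + D + 3000 * (193 + (1 - l)⁻¹)) * (A + M + N) * l ^ k := by ring
    _ ≤ (2048 * (1 - l)⁻¹ + D + 3000 * (193 + (1 - l)⁻¹)) * (A + M + N) *
        (16 * (t / r) ^ α) := by gcongr
    _ = _ := by ring

/-- The unit number `e` such that `{w | 0 < Im (e w)}` is the half plane bounded by the line
through the upper edge of `Sector β`, on the side of the sector. -/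
def upperEdge (β : ℝ) : ℂ := -exp (-(β * π : ℝ) * I)

lemma norm_upperEdge (β : ℝ) : ‖upperEdge β‖ = 1 := by
  rw [upperEdge, norm_neg, ← ofReal_neg, norm_exp_ofReal_mul_I]

lemma im_eq_norm_mul_sin (w : ℂ) : (1 * w).im = ‖w‖ * Real.sin (arg w) := by
  rw [one_mul, norm_mul_sin_arg]

lemma im_upperEdge_mul (β : ℝ) (w : ℂ) :
    (upperEdge β * w).im = ‖w‖ * Real.sin (β * π - arg w) := by
  conv_lhs => rw [← norm_mul_exp_arg_mul_I w]
  rw [upperEdge, neg_mul, mul_left_comm, ← exp_add, ← add_mul, ← ofReal_neg, ← ofReal_add, neg_im,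
    im_ofReal_mul, exp_ofReal_mul_I_im, ← mul_neg, ← Real.sin_neg]
  congr 2; ring

lemma upperEdge_re (β : ℝ) : (upperEdge β).re = - Real.cos (β * π) := by
  rw [upperEdge, neg_re, ← ofReal_neg, exp_ofReal_mul_I_re, Real.cos_neg]

lemma mem_sector_iff {β : ℝ} (hβ0 : 0 < β) (hβ : β < 1 / 2) {w : ℂ} :
    w ∈ Sector β ↔ 0 < (1 * w).im ∧ 0 < (upperEdge β * w).im := by
  have hπ := Real.pi_pos
  have hb : β * π < π / 2 := by nlinarith
  have hb0 : 0 < β * π := by positivity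
  constructor
  · rintro ⟨h0, h1, h2⟩
    rw [im_eq_norm_mul_sin, im_upperEdge_mul]
    have := norm_pos_iff.2 h0
    exact ⟨mul_pos this (Real.sin_pos_of_pos_of_lt_pi h1 (by linarith)),
      mul_pos this (Real.sin_pos_of_pos_of_lt_pi (by linarith) (by linarith))⟩
  · rintro ⟨h1, h2⟩
    have h0 : w ≠ 0 := by rintro rfl; simp at h1
    have hn := norm_pos_iff.2 h0
    rw [im_upperEdge_mul] at h2
    have h3 := (pos_iff_pos_of_mul_pos h2).1 hn
    have h4 : 0 < arg w := by
      rw [one_mul] at h1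
      have h5 : 0 ≤ arg w := arg_nonneg_iff.2 h1.le
      refine lt_of_le_of_ne h5 fun h6 => ?_
      rw [← norm_mul_sin_arg, ← h6] at h1
      simp at h1
    refine ⟨h0, h4, ?_⟩
    by_contra! h5
    have := Real.sin_nonpos_of_nonpos_of_neg_pi_le (by linarith : β * π - arg w ≤ 0)
      (by linarith [arg_le_pi w])
    linarith

lemma isOpen_sector {β : ℝ} (hβ0 : 0 < β) (hβ : β < 1 / 2) : IsOpen (Sector β) := by
  have : Sector β = {w | 0 < ((1 : ℂ) * w).im} ∩ {w | 0 < (upperEdge β * w).im} := by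
    ext w; exact mem_sector_iff hβ0 hβ
  rw [this]
  exact (isOpen_halfPlane 1).inter (isOpen_halfPlane _)

lemma im_nonneg_of_mem_closure_sector {β : ℝ} (hβ0 : 0 < β) (hβ : β < 1 / 2) {w : ℂ}
    (hw : w ∈ closure (Sector β)) : 0 ≤ (1 * w).im ∧ 0 ≤ (upperEdge β * w).im := by
  have h : closure (Sector β) ⊆ {w | 0 ≤ ((1 : ℂ) * w).im} ∩ {w | 0 ≤ (upperEdge β * w).im} := by
    apply closure_minimal _ ((isClosed_halfPlane 1).inter (isClosed_halfPlane _))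
    intro w hw
    have := (mem_sector_iff hβ0 hβ).1 hw
    exact ⟨this.1.le, this.2.le⟩
  exact h hw

lemma exp_mem_sector {β : ℝ} (hβ0 : 0 < β) (hβ : β < 1 / 2) :
    exp ((β * π / 2 : ℝ) * I) ∈ Sector β := by
  have hπ := Real.pi_pos
  have hb : β * π < π / 2 := by nlinarith
  have hb0 : 0 < β * π := by positivity
  have h : arg (exp ((β * π / 2 : ℝ) * I)) = β * π / 2 := by
    rw [exp_mul_I, arg_cos_add_sin_mul_I ⟨by linarith, by linarith⟩]
  refine ⟨exp_ne_zero _, ?_, ?_⟩ <;> rw [h] <;> linarith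

lemma mem_closure_sector {β : ℝ} (hβ0 : 0 < β) (hβ : β < 1 / 2) {w : ℂ}
    (h1 : 0 ≤ (1 * w).im) (h2 : 0 ≤ (upperEdge β * w).im) : w ∈ closure (Sector β) := by
  obtain ⟨h3, h4⟩ := (mem_sector_iff hβ0 hβ).1 (exp_mem_sector hβ0 hβ)
  set m := exp ((β * π / 2 : ℝ) * I)
  have hlim : Tendsto (fun t : ℝ => w + t * m) (𝓝[>] 0) (𝓝 w) := by
    have : Continuous fun t : ℝ => w + t * m := by fun_prop
    have := this.tendsto 0
    simp only [ofReal_zero, zero_mul, add_zero] at this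
    exact this.mono_left nhdsWithin_le_nhds
  refine mem_closure_of_tendsto hlim ?_
  filter_upwards [self_mem_nhdsWithin] with t ht
  have ht : 0 < t := ht
  have hmul : ∀ e : ℂ, (e * (w + t * m)).im = (e * w).im + t * (e * m).im := fun e => by
    rw [mul_add, add_im, mul_left_comm, im_ofReal_mul]
  rw [mem_sector_iff hβ0 hβ, hmul, hmul]
  constructor <;> positivity

/-- Near a point of the sector, one of the two edges is far away. -/
lemma exists_far_edge {β : ℝ} (hβ0 : 0 < β) (hβ : β < 1 / 2) {z : ℂ} (hz : z ∈ Sector β) :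
    ∃ e e' : ℂ, ‖e‖ = 1 ∧ ‖e'‖ = 1 ∧ Real.sin (β * π / 2) * ‖z‖ ≤ (e' * z).im ∧
      (∀ w, w ∈ Sector β ↔ 0 < (e * w).im ∧ 0 < (e' * w).im) ∧
      (∀ w, 0 ≤ (e * w).im → 0 ≤ (e' * w).im → w ∈ closure (Sector β)) := by
  have hπ := Real.pi_pos
  have hb : β * π < π / 2 := by nlinarith
  have hb0 : 0 < β * π := by positivity
  obtain ⟨h0, h1, h2⟩ := hz
  rcases le_total (arg z) (β * π / 2) with h | h
  · refine ⟨1, upperEdge β, norm_one, norm_upperEdge β, ?_, fun w => mem_sector_iff hβ0 hβ,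
      fun w => mem_closure_sector hβ0 hβ⟩
    rw [im_upperEdge_mul, mul_comm]
    gcongr
    exact Real.sin_le_sin_of_le_of_le_pi_div_two (by linarith) (by linarith) (by linarith)
  · refine ⟨upperEdge β, 1, norm_upperEdge β, norm_one, ?_, fun w => (mem_sector_iff hβ0 hβ).trans
      and_comm, fun w h h' => mem_closure_sector hβ0 hβ h' h⟩
    rw [im_eq_norm_mul_sin, mul_comm]
    gcongr
    exact Real.sin_le_sin_of_le_of_le_pi_div_two (by linarith) (by linarith) (by linarith)

/-- The barrier for the Poisson equation. -/
def sectorBarrier (β : ℝ) (w : ℂ) : ℝ :=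
  (2 * Real.cos (β * π))⁻¹ * ((1 * w).im * (upperEdge β * w).im)

lemma cos_beta_pos {β : ℝ} (hβ0 : 0 < β) (hβ : β < 1 / 2) : 0 < Real.cos (β * π) := by
  have hπ := Real.pi_pos
  exact Real.cos_pos_of_mem_Ioo ⟨by nlinarith, by nlinarith⟩

lemma contDiff_sectorBarrier (β : ℝ) : ContDiff ℝ 2 (sectorBarrier β) :=
  contDiff_const.mul ((contDiff_im_mul 1).mul (contDiff_im_mul _))

lemma lap_sectorBarrier {β : ℝ} (hβ0 : 0 < β) (hβ : β < 1 / 2) (z : ℂ) :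
    lap (sectorBarrier β) z = -1 := by
  have hc := cos_beta_pos hβ0 hβ
  have h : ∀ a, hess (sectorBarrier β) a a z = (2 * Real.cos (β * π))⁻¹ *
      ((1 * a).im * (upperEdge β * a).im + (1 * a).im * (upperEdge β * a).im) := fun a => by
    rw [← hess_im_mul_im 1 (upperEdge β) a a z]
    exact hess_const_mul ((contDiff_im_mul 1).mul (contDiff_im_mul _)).contDiffAt _ a a
  rw [lap_eq_hess, h, h]
  simp only [one_mul, one_im, zero_mul, mul_one, mul_im, I_im, I_re, upperEdge_re]
  field_simp
  ring

lemma sectorBarrier_nonneg {β : ℝ} (hβ0 : 0 < β) (hβ : β < 1 / 2) {w : ℂ}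
    (hw : w ∈ closure (Sector β)) : 0 ≤ sectorBarrier β w := by
  have hc := cos_beta_pos hβ0 hβ
  obtain ⟨h1, h2⟩ := im_nonneg_of_mem_closure_sector hβ0 hβ hw
  unfold sectorBarrier
  positivity

lemma sectorBarrier_le {β : ℝ} (hβ0 : 0 < β) (hβ : β < 1 / 2) (w : ℂ) :
    sectorBarrier β w ≤ (2 * Real.cos (β * π))⁻¹ * ‖w‖ ^ 2 := by
  have hc := cos_beta_pos hβ0 hβ
  unfold sectorBarrier
  gcongr
  refine (le_abs_self _).trans ?_
  rw [abs_mul, sq]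
  exact mul_le_mul (abs_im_mul_le norm_one w) (abs_im_mul_le (norm_upperEdge β) w) (abs_nonneg _)
    (norm_nonneg _)

/-- A positive harmonic function on the sector growing faster than quadratically. -/
def sectorGauge (β : ℝ) (w : ℂ) : ℝ :=
  ((exp ((-(β * π / 2) : ℝ) * I) * w) ^ ((1 + 1 / (2 * β) : ℝ) : ℂ)).re

lemma re_rotate_pos {β : ℝ} (hβ0 : 0 < β) (hβ : β < 1 / 2) {w : ℂ} (hw : w ∈ Sector β) :
    0 < (exp ((-(β * π / 2) : ℝ) * I) * w).re ∧
      arg (exp ((-(β * π / 2) : ℝ) * I) * w) = arg w - β * π / 2 := by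
  have hπ := Real.pi_pos
  have hb : β * π < π / 2 := by nlinarith
  have hb0 : 0 < β * π := by positivity
  obtain ⟨h0, h1, h2⟩ := hw
  have h : exp ((-(β * π / 2) : ℝ) * I) * w = ‖w‖ * exp ((arg w - β * π / 2 : ℝ) * I) := by
    conv_lhs => rw [← norm_mul_exp_arg_mul_I w]
    rw [mul_left_comm, ← exp_add, ← add_mul, ← ofReal_add]
    congr 4; ring
  have hn := norm_pos_iff.2 h0
  rw [h]
  constructor
  · rw [re_ofReal_mul, exp_ofReal_mul_I_re]
    exact mul_pos hn (Real.cos_pos_of_mem_Ioo ⟨by linarith, by linarith⟩)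
  · rw [arg_real_mul _ hn, exp_mul_I, arg_cos_add_sin_mul_I ⟨by linarith, by linarith⟩]

lemma re_rotate_nonneg {β : ℝ} (hβ0 : 0 < β) (hβ : β < 1 / 2) {w : ℂ}
    (hw : w ∈ closure (Sector β)) : 0 ≤ (exp ((-(β * π / 2) : ℝ) * I) * w).re := by
  have hc : IsClosed {w | 0 ≤ (exp ((-(β * π / 2) : ℝ) * I) * w).re} :=
    isClosed_le continuous_const (by fun_prop)
  exact closure_minimal (fun w hw => (re_rotate_pos hβ0 hβ hw).1.le) hc hw

lemma continuousOn_sectorGauge {β : ℝ} (hβ0 : 0 < β) (hβ : β < 1 / 2) :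
    ContinuousOn (sectorGauge β) (closure (Sector β)) := by
  intro w hw
  apply ContinuousAt.continuousWithinAt
  have h1 := continuousAt_cpow_const_of_re_pos (w := ((1 + 1 / (2 * β) : ℝ) : ℂ))
    (Or.inl (re_rotate_nonneg hβ0 hβ hw)) (by rw [ofReal_re]; positivity)
  have h2 : ContinuousAt (fun w => exp ((-(β * π / 2) : ℝ) * I) * w) w := by fun_prop
  exact continuous_re.continuousAt.comp (ContinuousAt.comp (f := fun w =>
    exp ((-(β * π / 2) : ℝ) * I) * w) (g := fun w => w ^ ((1 + 1 / (2 * β) : ℝ) : ℂ)) h1 h2)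

lemma differentiableOn_rotate_cpow {β : ℝ} (hβ0 : 0 < β) (hβ : β < 1 / 2) :
    DifferentiableOn ℂ (fun w => (exp ((-(β * π / 2) : ℝ) * I) * w) ^
      ((1 + 1 / (2 * β) : ℝ) : ℂ)) (Sector β) := by
  intro w hw
  refine DifferentiableAt.differentiableWithinAt ?_
  exact ((differentiableAt_id.const_mul _).cpow_const
    (Or.inl (re_rotate_pos hβ0 hβ hw).1))

lemma exists_le_sectorGauge {β : ℝ} (hβ0 : 0 < β) (hβ : β < 1 / 2) :
    ∃ c > 0, ∀ w ∈ closure (Sector β), c * ‖w‖ ^ (1 + 1 / (2 * β)) ≤ sectorGauge β w := by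
  have hπ := Real.pi_pos
  have hb : β * π < π / 2 := by nlinarith
  have hb0 : 0 < β * π := by positivity
  have h1 : β * π / 2 * (1 + 1 / (2 * β)) = β * π / 2 + π / 4 := by field_simp; ring
  refine ⟨Real.cos (β * π / 2 * (1 + 1 / (2 * β))), Real.cos_pos_of_mem_Ioo
    ⟨by linarith, by linarith⟩, ?_⟩
  refine le_on_closure (fun w hw => ?_) ?_ (continuousOn_sectorGauge hβ0 hβ)
  · obtain ⟨h2, h3⟩ := re_rotate_pos hβ0 hβ hw
    have hn : ‖exp ((-(β * π / 2) : ℝ) * I) * w‖ = ‖w‖ := by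
      rw [norm_mul, norm_exp_ofReal_mul_I, one_mul]
    rw [sectorGauge, cpow_ofReal_re, h3, hn, mul_comm]
    gcongr
    rw [← Real.cos_abs ((arg w - β * π / 2) * _), abs_mul,
      abs_of_pos (by positivity : 0 < 1 + 1 / (2 * β))]
    refine Real.cos_le_cos_of_nonneg_of_le_pi (by positivity) (by linarith) ?_
    gcongr
    rw [abs_le]
    constructor <;> linarith [hw.2.1, hw.2.2]
  · refine Continuous.continuousOn ?_
    exact continuous_const.mul (continuous_norm.rpow_const fun _ => Or.inr (by positivity))

lemma eventually_growth_le {γ c C₀ : ℝ} (hγ : 2 < γ) (hc : 0 < c) :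
    ∀ᶠ L : ℝ in atTop, C₀ * L ^ 2 * Real.log (Real.exp 1 + L) ≤ c * L ^ γ := by
  set ε := (γ - 2) / 2 with hε
  have hε0 : 0 < ε := by rw [hε]; linarith
  filter_upwards [(tendsto_rpow_atTop hε0).eventually_ge_atTop (|C₀| * (2 ^ ε / ε) / c),
    eventually_ge_atTop (Real.exp 1), eventually_gt_atTop 0] with L h1 h2 h3
  have h4 : Real.log (Real.exp 1 + L) ≤ 2 ^ ε / ε * L ^ ε := by
    refine (Real.log_le_rpow_div (by positivity) hε0).trans ?_
    rw [div_mul_eq_mul_div, ← Real.mul_rpow (by norm_num) h3.le]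
    gcongr
    linarith
  have h5 : 0 ≤ Real.log (Real.exp 1 + L) :=
    Real.log_nonneg (by linarith [Real.add_one_le_exp (1 : ℝ)])
  have h6 : L ^ γ = L ^ 2 * (L ^ ε * L ^ ε) := by
    rw [← Real.rpow_add h3, ← Real.rpow_natCast, ← Real.rpow_add h3]
    congr 1
    rw [hε]; push_cast; ring
  rw [div_le_iff₀ hc] at h1
  calc C₀ * L ^ 2 * Real.log (Real.exp 1 + L) ≤ |C₀| * L ^ 2 * (2 ^ ε / ε * L ^ ε) := by
        gcongr
        exact le_abs_self _
    _ = L ^ 2 * L ^ ε * (|C₀| * (2 ^ ε / ε)) := by ring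
    _ ≤ L ^ 2 * L ^ ε * (L ^ ε * c) := by gcongr
    _ = c * L ^ γ := by rw [h6]; ring

/-- Maximum principle of Phragmén-Lindelöf type in the sector. -/
lemma le_sectorBarrier {β : ℝ} (hβ0 : 0 < β) (hβ : β < 1 / 2) {u : ℂ → ℝ} {M C₀ : ℝ} (hM : 0 ≤ M)
    (hc : ContinuousOn u (closure (Sector β))) (hs : ContDiffOn ℝ 2 u (Sector β))
    (hl : ∀ z ∈ Sector β, -M ≤ lap u z) (hb : ∀ z ∈ frontier (Sector β), u z = 0)
    (hg : ∀ z ∈ Sector β, u z ≤ C₀ * ‖z‖ ^ 2 * Real.log (Real.exp 1 + ‖z‖)) {w : ℂ}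
    (hw : w ∈ Sector β) : u w ≤ M * sectorBarrier β w := by
  have hSo := isOpen_sector hβ0 hβ
  obtain ⟨c, hc0, hcg⟩ := exists_le_sectorGauge hβ0 hβ
  have hγ : 2 < 1 + 1 / (2 * β) := by
    have : 1 < 1 / (2 * β) := by rw [lt_div_iff₀ (by positivity)]; linarith
    linarith
  have key : ∀ δ > 0, u w - (M + δ) * sectorBarrier β w - δ * sectorGauge β w ≤ 0 := by
    intro δ hδ
    obtain ⟨L, hL1, hL2⟩ := ((eventually_growth_le (C₀ := C₀) hγ (mul_pos hδ hc0)).and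
      (eventually_gt_atTop ‖w‖)).exists
    set V := Sector β ∩ ball 0 L with hV
    have hVo : IsOpen V := hSo.inter isOpen_ball
    have hVc : closure V ⊆ closure (Sector β) ∩ closedBall 0 L :=
      (closure_inter_subset_inter_closure _ _).trans
        (inter_subset_inter_right _ closure_ball_subset_closedBall)
    have hgd := differentiableOn_rotate_cpow hβ0 hβ
    have hgauge : ∀ z ∈ Sector β, ContDiffAt ℝ 2 (sectorGauge β) z := fun z hz =>
      contDiffAt_re hSo hgd hz
    have hV1 : V ⊆ Sector β := inter_subset_left
    have hu : ∀ z ∈ Sector β, ContDiffAt ℝ 2 u z := fun z hz => hs.contDiffAt (hSo.mem_nhds hz)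
    refine le_of_lap_pos (v := fun w => u w - (M + δ) * sectorBarrier β w - δ * sectorGauge β w)
      hVo (isBounded_ball.subset inter_subset_right) ?_ ?_ ?_ ?_
      (subset_closure ⟨hw, by simpa using hL2⟩)
    · have h1 := (contDiff_sectorBarrier β).continuous
      have h2 := continuousOn_sectorGauge hβ0 hβ
      have h3 : closure V ⊆ closure (Sector β) := closure_mono hV1
      exact ((hc.mono h3).sub (h1.continuousOn.const_mul _)).sub ((h2.mono h3).const_mul _)
    · exact ((hs.mono hV1).sub (contDiff_const.mul (contDiff_sectorBarrier β)).contDiffOn).sub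
        fun z hz => (contDiffAt_const.mul (hgauge z (hV1 hz))).contDiffWithinAt
    · intro z hz
      have hz := hV1 hz
      have h1 := (contDiff_sectorBarrier β).contDiffAt (x := z)
      have h1' : ContDiffAt ℝ 2 (fun w => (M + δ) * sectorBarrier β w) z := contDiffAt_const.mul h1
      have h2 := hgauge z hz
      have h2' : ContDiffAt ℝ 2 (fun w => δ * sectorGauge β w) z := contDiffAt_const.mul h2
      have h3 := lap_sectorBarrier hβ0 hβ z
      have h4 : lap (sectorGauge β) z = 0 := lap_re hSo hgd hz
      have h5 := hl z hz
      have h6 : ∀ a, hess (fun w => u w - (M + δ) * sectorBarrier β w - δ * sectorGauge β w) a a z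
          = hess u a a z - (M + δ) * hess (sectorBarrier β) a a z -
            δ * hess (sectorGauge β) a a z := fun a => by
        rw [hess_sub ((hu z hz).sub h1') h2', hess_sub (hu z hz) h1', hess_const_mul h1,
          hess_const_mul h2]
      rw [lap_eq_hess] at h3 h4 h5 ⊢
      rw [h6, h6]
      nlinarith
    · intro y hy
      have hyc := hVc (frontier_subset_closure hy)
      have h1 := sectorBarrier_nonneg hβ0 hβ hyc.1
      have h2 := hcg y hyc.1
      have h3 : 0 ≤ c * ‖y‖ ^ (1 + 1 / (2 * β)) := by positivity
      have h4 : 0 ≤ (M + δ) * sectorBarrier β y := by positivity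
      by_cases hyS : y ∈ Sector β
      · have hyL : ‖y‖ = L := by
          have h5 : ‖y‖ ≤ L := by simpa using hyc.2
          refine le_antisymm h5 ?_
          by_contra! h6
          have : y ∈ V := ⟨hyS, by simpa using h6⟩
          rw [hVo.frontier_eq] at hy
          exact hy.2 this
        have h7 := hg y hyS
        rw [hyL] at h7 h2
        have h8 := mul_le_mul_of_nonneg_left h2 hδ.le
        linarith
      · have h5 : u y = 0 := hb y (by rw [hSo.frontier_eq]; exact ⟨hyc.1, hyS⟩)
        have h6 : 0 ≤ δ * sectorGauge β y := mul_nonneg hδ.le (h3.trans h2)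
        rw [h5]; linarith
  have hlim : Tendsto (fun δ => u w - (M + δ) * sectorBarrier β w - δ * sectorGauge β w)
      (𝓝[>] 0) (𝓝 (u w - (M + 0) * sectorBarrier β w - 0 * sectorGauge β w)) := by
    have : Continuous fun δ => u w - (M + δ) * sectorBarrier β w - δ * sectorGauge β w := by
      fun_prop
    exact (this.tendsto 0).mono_left nhdsWithin_le_nhds
  have := le_of_tendsto hlim (by filter_upwards [self_mem_nhdsWithin] with δ hδ using key δ hδ)
  linarith

lemma abs_le_of_sector {β : ℝ} (hβ0 : 0 < β) (hβ : β < 1 / 2) {u : ℂ → ℝ} {M C₀ : ℝ} (hM : 0 ≤ M)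
    (hc : ContinuousOn u (closure (Sector β))) (hs : ContDiffOn ℝ 2 u (Sector β))
    (hl : ∀ z ∈ Sector β, |lap u z| ≤ M) (hb : ∀ z ∈ frontier (Sector β), u z = 0)
    (hg : ∀ z ∈ Sector β, |u z| ≤ C₀ * ‖z‖ ^ 2 * Real.log (Real.exp 1 + ‖z‖)) {w : ℂ}
    (hw : w ∈ Sector β) : |u w| ≤ M * (2 * Real.cos (β * π))⁻¹ * ‖w‖ ^ 2 := by
  have hSo := isOpen_sector hβ0 hβ
  have h1 : M * sectorBarrier β w ≤ M * (2 * Real.cos (β * π))⁻¹ * ‖w‖ ^ 2 := by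
    rw [mul_assoc]
    exact mul_le_mul_of_nonneg_left (sectorBarrier_le hβ0 hβ w) hM
  refine (abs_le'.2 ⟨?_, ?_⟩).trans h1
  · exact le_sectorBarrier hβ0 hβ hM hc hs (fun z hz => (abs_le.1 (hl z hz)).1) hb
      (fun z hz => (le_abs_self _).trans (hg z hz)) hw
  · have hs' : ContDiffOn ℝ 2 (fun w => -1 * u w) (Sector β) := contDiffOn_const.mul hs
    have := le_sectorBarrier hβ0 hβ hM (u := fun w => -1 * u w) (hc.const_mul _) hs'
      (fun z hz => ?_) (fun z hz => by rw [hb z hz, mul_zero])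
      (fun z hz => (by rw [neg_one_mul]; exact neg_le_abs _ : -1 * u z ≤ |u z|).trans (hg z hz)) hw
    · linarith
    · have hu := hs.contDiffAt (hSo.mem_nhds hz)
      have h2 := (abs_le.1 (hl z hz)).2
      rw [lap_eq_hess] at h2 ⊢
      rw [hess_const_mul hu, hess_const_mul hu]
      linarith

lemma abs_rpow_norm_sub_le {α : ℝ} (hα : 0 ≤ α) (hα1 : α ≤ 1) (z z' : ℂ) :
    |‖z‖ ^ α - ‖z'‖ ^ α| ≤ ‖z - z'‖ ^ α := by
  have key : ∀ z z' : ℂ, ‖z‖ ^ α - ‖z'‖ ^ α ≤ ‖z - z'‖ ^ α := fun z z' => by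
    have h1 : ‖z‖ ≤ ‖z - z'‖ + ‖z'‖ := by
      have := norm_add_le (z - z') z'
      rwa [sub_add_cancel] at this
    have h2 := Real.rpow_le_rpow (norm_nonneg _) h1 hα
    have h3 := Real.rpow_add_le_add_rpow (norm_nonneg (z - z')) (norm_nonneg z') hα hα1
    linarith
  refine abs_le'.2 ⟨key z z', ?_⟩
  rw [neg_sub, norm_sub_rev]
  exact key _ _

/-- Data of the Dirichlet problem in the sector, with a bound `N` for the scale-invariant Hölder
norm of the right hand side and a bound `M` for its supremum. -/
structure IsSectorSol (α β : ℝ) (f Ψ : ℂ → ℝ) (M N : ℝ) : Prop where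
  cont : ContinuousOn Ψ (closure (Sector β))
  smooth : ContDiffOn ℝ 2 Ψ (Sector β)
  lap_eq : ∀ z ∈ Sector β, lap Ψ z = f z
  bdry : ∀ z ∈ frontier (Sector β), Ψ z = 0
  growth : ∃ C₀ : ℝ, ∀ z ∈ Sector β, |Ψ z| ≤ C₀ * ‖z‖ ^ 2 * Real.log (Real.exp 1 + ‖z‖)
  bound : ∀ z ∈ Sector β, |f z| ≤ M
  holder : ∀ z ∈ Sector β, ∀ z' ∈ Sector β,
    |‖z‖ ^ α * f z - ‖z'‖ ^ α * f z'| ≤ N * ‖z - z'‖ ^ α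

lemma IsSectorSol.abs_sub_le {α β : ℝ} (hα0 : 0 < α) (hα1 : α < 1) {f Ψ : ℂ → ℝ} {M N : ℝ}
    (h : IsSectorSol α β f Ψ M N) {w w' : ℂ} (hw : w ∈ Sector β) (hw' : w' ∈ Sector β) :
    ‖w‖ ^ α * |f w - f w'| ≤ (N + M) * ‖w - w'‖ ^ α := by
  have h1 := h.holder w hw w' hw'
  have h2 := h.bound w' hw'
  have h3 := abs_rpow_norm_sub_le hα0.le hα1.le w w'
  have h4 : ‖w‖ ^ α * (f w - f w') = (‖w‖ ^ α * f w - ‖w'‖ ^ α * f w') -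
      (‖w‖ ^ α - ‖w'‖ ^ α) * f w' := by ring
  rw [← abs_of_nonneg (by positivity : 0 ≤ ‖w‖ ^ α), ← abs_mul, h4]
  refine (abs_sub _ _).trans ?_
  rw [abs_mul, add_mul, mul_comm M]
  gcongr

lemma sin_half_pos {β : ℝ} (hβ0 : 0 < β) (hβ : β < 1 / 2) : 0 < Real.sin (β * π / 2) := by
  have hπ := Real.pi_pos
  exact Real.sin_pos_of_pos_of_lt_pi (by positivity) (by nlinarith)

/-- Around every point of the sector, a ball of comparable size sees at most one edge. -/
lemma IsSectorSol.exists_isHalfSol {α β : ℝ} (hβ0 : 0 < β) (hβ : β < 1 / 2) (hα0 : 0 < α)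
    (hα1 : α < 1) {f Ψ : ℂ → ℝ} {M N : ℝ} (hM : 0 ≤ M) (hN : 0 ≤ N)
    (h : IsSectorSol α β f Ψ M N) {z : ℂ} (hz : z ∈ Sector β) {r : ℝ}
    (hr : r = Real.sin (β * π / 2) * ‖z‖ / 8) :
    ∃ e : ℂ, ‖e‖ = 1 ∧ 0 < (e * z).im ∧ IsHalfSol e Ψ f z (4 * r) ∧
      (∀ w ∈ Sector β, 0 < (e * w).im) ∧
      (∀ w ∈ ball z (4 * r), 0 < (e * w).im → w ∈ Sector β) ∧
      (∀ w ∈ ball z r, 0 < (e * w).im →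
        |Ψ w| ≤ 256 * (2 * Real.cos (β * π))⁻¹ / Real.sin (β * π / 2) ^ 2 * M * r ^ 2) ∧
      (∀ w ∈ ball z (4 * r), 0 < (e * w).im → ∀ w' ∈ ball z (4 * r), 0 < (e * w').im →
        |f w - f w'| ≤ (N + M) * (dist w w' / (4 * r)) ^ α) := by
  obtain ⟨e, e', he, he', hfar, hiff, hcl⟩ := exists_far_edge hβ0 hβ hz
  have hs := sin_half_pos hβ0 hβ
  have hs1 := Real.sin_le_one (β * π / 2)
  have hcos := cos_beta_pos hβ0 hβ
  set s := Real.sin (β * π / 2) with hsdef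
  have hSo := isOpen_sector hβ0 hβ
  have hz0 : 0 < ‖z‖ := norm_pos_iff.2 hz.1
  have hr0 : 0 < r := by rw [hr]; positivity
  have h4r : 4 * r = s * ‖z‖ / 2 := by rw [hr]; ring
  have h4z : 4 * r ≤ ‖z‖ / 2 := by rw [h4r]; nlinarith
  have hfar' : ∀ w ∈ ball z (4 * r), 0 < (e' * w).im := by
    intro w hw
    have h1 := (abs_le.1 (abs_im_sub_le he' w z)).1
    have h2 : dist w z < 4 * r := hw
    have h3 : 0 < s * ‖z‖ := by positivity
    linarith
  have hmem : ∀ w ∈ ball z (4 * r), 0 < (e * w).im → w ∈ Sector β := fun w hw hw' =>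
    (hiff w).2 ⟨hw', hfar' w hw⟩
  have hnorm : ∀ w ∈ ball z (4 * r), ‖z‖ / 2 ≤ ‖w‖ ∧ ‖w‖ ≤ 2 * ‖z‖ := by
    intro w hw
    have h2 : dist w z < 4 * r := hw
    rw [dist_eq_norm] at h2
    have h3 := abs_le.1 ((abs_norm_sub_norm_le w z).trans (h2.le.trans h4z))
    constructor <;> linarith [h3.1, h3.2]
  refine ⟨e, he, ((hiff z).1 hz).1, ⟨?_, ?_, fun w hw hw' => h.lap_eq w (hmem w hw hw'), ?_⟩,
    fun w hw => ((hiff w).1 hw).1, hmem, ?_, ?_⟩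
  · exact h.cont.mono fun w hw => hcl w hw.2 (hfar' w hw.1).le
  · exact h.smooth.mono fun w hw => hmem w hw.1 hw.2
  · intro w hw hw'
    refine h.bdry w ?_
    rw [hSo.frontier_eq]
    refine ⟨hcl w hw'.ge (hfar' w hw).le, fun hS => ?_⟩
    exact ((hiff w).1 hS).1.ne' hw'
  · intro w hw hw'
    have hw4 : w ∈ ball z (4 * r) := ball_subset_ball (by linarith) hw
    obtain ⟨C₀, hC₀⟩ := h.growth
    have h1 := abs_le_of_sector hβ0 hβ hM h.cont h.smooth
      (fun y hy => by rw [h.lap_eq y hy]; exact h.bound y hy) h.bdry hC₀ (hmem w hw4 hw')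
    refine h1.trans ?_
    have h2 : M * (2 * Real.cos (β * π))⁻¹ * ‖w‖ ^ 2 ≤
        M * (2 * Real.cos (β * π))⁻¹ * (2 * ‖z‖) ^ 2 := by
      gcongr
      exact (hnorm w hw4).2
    refine h2.trans (le_of_eq ?_)
    rw [hr]; field_simp; ring
  · intro w hw hw0 w' hw' hw0'
    have h1 := h.abs_sub_le hα0 hα1 (hmem w hw hw0) (hmem w' hw' hw0')
    have h2 : (dist w w' / ‖w‖) ^ α ≤ (dist w w' / (4 * r)) ^ α := by
      gcongr
      linarith [(hnorm w hw).1]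
    have h3 : 0 < ‖w‖ := by linarith [(hnorm w hw).1]
    refine le_trans ?_ (mul_le_mul_of_nonneg_left h2 (by positivity : 0 ≤ N + M))
    rw [Real.div_rpow dist_nonneg (norm_nonneg _), mul_div_assoc', le_div_iff₀ (by positivity),
      dist_eq_norm, mul_comm]
    exact h1

lemma IsSectorSol.contDiffAt {α β : ℝ} (hβ0 : 0 < β) (hβ : β < 1 / 2) {f Ψ : ℂ → ℝ} {M N : ℝ}
    (h : IsSectorSol α β f Ψ M N) {z : ℂ} (hz : z ∈ Sector β) : ContDiffAt ℝ 2 Ψ z :=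
  h.smooth.contDiffAt ((isOpen_sector hβ0 hβ).mem_nhds hz)

lemma exists_abs_hess_le_log {α β : ℝ} (hβ0 : 0 < β) (hβ : β < 1 / 2) (hα0 : 0 < α)
    (hα1 : α < 1) : ∃ C > 0, ∀ {f Ψ : ℂ → ℝ} {M N : ℝ}, 0 < M → M ≤ N →
    IsSectorSol α β f Ψ M N → ∀ v₁ ∈ ({1, I} : Set ℂ), ∀ v₂ ∈ ({1, I} : Set ℂ),
    ∀ z ∈ Sector β, |hess Ψ v₁ v₂ z| ≤ C * M * (1 + Real.log (1 + 2 * N / M)) := by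
  obtain ⟨C, hC, hCle⟩ := exists_norm_scHess_le_log hα0
  have hs := sin_half_pos hβ0 hβ
  have hcos := cos_beta_pos hβ0 hβ
  set K := 256 * (2 * Real.cos (β * π))⁻¹ / Real.sin (β * π / 2) ^ 2 with hK
  have hK0 : 0 < K := by positivity
  refine ⟨1 + C * (K + 1), by positivity, ?_⟩
  intro f Ψ M N hM hMN h v₁ hv₁ v₂ hv₂ z hz
  have hN : 0 < N := by linarith
  have hz0 : 0 < ‖z‖ := norm_pos_iff.2 hz.1
  obtain ⟨e, he, hez, hsol, -, hmem, hΨ, hf⟩ :=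
    h.exists_isHalfSol hβ0 hβ hα0 hα1 hM.le hN.le hz rfl
  set r := Real.sin (β * π / 2) * ‖z‖ / 8
  have hr0 : 0 < r := by positivity
  have hz4 : z ∈ ball z (4 * r) := mem_ball_self (by positivity)
  have h1 := hCle he hr0 hez hsol (by positivity : 0 ≤ K * M) hM (by linarith : 0 < N + M) hΨ
    (fun w hw hw' => h.bound w (hmem w hw hw')) (fun w hw hw' => hf w hw hw' z hz4 hez)
  have h2 := abs_hess_le he (h.contDiffAt hβ0 hβ hz) hv₁ hv₂
  have h3 : |lap Ψ z| ≤ M := by rw [h.lap_eq z hz]; exact h.bound z hz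
  have h4 : Real.log (1 + (N + M) / M) ≤ Real.log (1 + 2 * N / M) := by
    apply Real.log_le_log (by positivity)
    gcongr
    linarith
  have h5 : 0 ≤ Real.log (1 + (N + M) / M) := by
    apply Real.log_nonneg
    have : 0 < (N + M) / M := by positivity
    linarith
  set X := Real.log (1 + (N + M) / M)
  set Y := Real.log (1 + 2 * N / M)
  calc |hess Ψ v₁ v₂ z| ≤ M + C * (K * M + M * (1 + X)) := by linarith
    _ ≤ M + C * (K * M + M * (1 + Y)) := by gcongr
    _ ≤ M * (1 + Y) + C * (K * (M * (1 + Y)) + M * (1 + Y)) := by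
      have h6 : M ≤ M * (1 + Y) := by nlinarith
      gcongr
    _ = _ := by ring

lemma exists_abs_hess_sub_le {α β : ℝ} (hβ0 : 0 < β) (hβ : β < 1 / 2) (hα0 : 0 < α)
    (hα1 : α < 1) : ∃ C > 0, ∀ {f Ψ : ℂ → ℝ} {N : ℝ}, 0 < N →
    IsSectorSol α β f Ψ N N → ∀ v₁ ∈ ({1, I} : Set ℂ), ∀ v₂ ∈ ({1, I} : Set ℂ),
    (∀ z ∈ Sector β, |hess Ψ v₁ v₂ z| ≤ C * N) ∧ ∀ z ∈ Sector β, ∀ z' ∈ Sector β,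
      |hess Ψ v₁ v₂ z - hess Ψ v₁ v₂ z'| ≤ C * N * (‖z - z'‖ / ‖z‖) ^ α := by
  obtain ⟨C₁, hC₁, hC₁le⟩ := exists_abs_hess_le_log hβ0 hβ hα0 hα1
  obtain ⟨C₂, hC₂, hC₂le⟩ := exists_norm_scHess_sub_le hα0 hα1
  have hs := sin_half_pos hβ0 hβ
  have hs1 := Real.sin_le_one (β * π / 2)
  have hcos := cos_beta_pos hβ0 hβ
  set s := Real.sin (β * π / 2) with hsdef
  set K := 256 * (2 * Real.cos (β * π))⁻¹ / s ^ 2 with hK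
  have hK0 : 0 < K := by positivity
  refine ⟨3 * C₁ + 2 * (3 * C₁) * (128 / s) + (2 + C₂ * (K + 3)) * (8 / s), by positivity, ?_⟩
  intro f Ψ N hN h v₁ hv₁ v₂ hv₂
  have hb : ∀ z ∈ Sector β, |hess Ψ v₁ v₂ z| ≤ 3 * C₁ * N := by
    intro z hz
    refine (hC₁le hN le_rfl h v₁ hv₁ v₂ hv₂ z hz).trans ?_
    rw [mul_div_cancel_right₀ _ hN.ne']
    have := Real.log_le_sub_one_of_pos (by norm_num : (0 : ℝ) < 1 + 2)
    have h1 : C₁ * N * (1 + Real.log (1 + 2)) ≤ C₁ * N * 3 := by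
      gcongr; linarith
    linarith
  have h0 : 0 ≤ 2 * (3 * C₁) * (128 / s) := by positivity
  have h0' : 0 ≤ (2 + C₂ * (K + 3)) * (8 / s) := by positivity
  refine ⟨fun z hz => (hb z hz).trans (by gcongr; linarith), fun z hz z' hz' => ?_⟩
  have hz0 : 0 < ‖z‖ := norm_pos_iff.2 hz.1
  set x := ‖z - z'‖ / ‖z‖ with hx
  have hx0 : 0 ≤ x := by positivity
  rcases lt_or_ge x (s / 128) with hxs | hxs
  · obtain ⟨e, he, hez, hsol, hpos, hmem, hΨ, hf⟩ :=
      h.exists_isHalfSol hβ0 hβ hα0 hα1 hN.le hN.le hz rfl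
    rw [← hsdef] at hsol hmem hΨ hf
    set r := s * ‖z‖ / 8 with hr
    have hr0 : 0 < r := by positivity
    have hd : dist z z' / r = 8 / s * x := by
      rw [dist_eq_norm, hx, hr]; field_simp
    have hzz' : z' ∈ ball z (r / 16) := by
      rw [hx, div_lt_iff₀ hz0] at hxs
      rw [mem_ball, dist_comm, dist_eq_norm, hr]
      linarith
    have hz4 : z ∈ ball z (4 * r) := mem_ball_self (by positivity)
    have hz'4 : z' ∈ ball z (4 * r) := ball_subset_ball (by linarith) hzz'
    have h1 := hC₂le he hr0 hez hsol (by positivity : 0 ≤ K * N) hN.le (by linarith : 0 < N + N) hΨ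
      (h.bound z hz) hf hzz' (hpos z' hz')
    have h2 := abs_hess_sub_le he (h.contDiffAt hβ0 hβ hz) (h.contDiffAt hβ0 hβ hz') hv₁ hv₂
    rw [h.lap_eq z hz, h.lap_eq z' hz'] at h2
    have h3 := hf z hz4 hez z' hz'4 (hpos z' hz')
    have h4 : (dist z z' / (4 * r)) ^ α ≤ (dist z z' / r) ^ α := by
      gcongr; linarith
    have h5 : (dist z z' / r) ^ α ≤ 8 / s * x ^ α := by
      rw [hd, Real.mul_rpow (by positivity) hx0]
      gcongr
      have h8 : 1 ≤ 8 / s := by rw [le_div_iff₀ hs]; linarith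
      have := Real.rpow_le_rpow_of_exponent_le h8 hα1.le
      rwa [Real.rpow_one] at this
    set y := (dist z z' / r) ^ α
    calc _ ≤ (N + N) * y + C₂ * (K * N + N + (N + N)) * y := by
          refine h2.trans (add_le_add (h3.trans ?_) h1)
          gcongr
      _ = (2 + C₂ * (K + 3)) * N * y := by ring
      _ ≤ (2 + C₂ * (K + 3)) * N * (8 / s * x ^ α) := by gcongr
      _ = (2 + C₂ * (K + 3)) * (8 / s) * N * x ^ α := by ring
      _ ≤ _ := by
        gcongr
        linarith
  · have h1 : s / 128 ≤ x ^ α := by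
      have h2 : (s / 128) ^ (1 : ℝ) ≤ (s / 128) ^ α :=
        Real.rpow_le_rpow_of_exponent_ge (by positivity) (by linarith) hα1.le
      rw [Real.rpow_one] at h2
      exact h2.trans (by gcongr)
    have h3 : |hess Ψ v₁ v₂ z - hess Ψ v₁ v₂ z'| ≤ 2 * (3 * C₁) * N := by
      refine (abs_sub _ _).trans ?_
      linarith [hb z hz, hb z' hz']
    calc _ ≤ 2 * (3 * C₁) * N := h3
      _ = 2 * (3 * C₁) * (128 / s) * N * (s / 128) := by field_simp
      _ ≤ 2 * (3 * C₁) * (128 / s) * N * x ^ α := by gcongr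
      _ ≤ _ := by
        gcongr
        linarith

lemma abs_le_toReal_supNormC {D : Set ℂ} {f : ℂ → ℝ} (h : supNormC D f ≠ ⊤) {z : ℂ}
    (hz : z ∈ D) : |f z| ≤ (supNormC D f).toReal := by
  have h1 : (‖f z‖₊ : ℝ≥0∞) ≤ supNormC D f :=
    le_iSup (fun z : D => (‖f (z : ℂ)‖₊ : ℝ≥0∞)) ⟨z, hz⟩
  simpa using ENNReal.toReal_mono h h1

lemma supNormC_mono {D E : Set ℂ} (h : D ⊆ E) (f : ℂ → ℝ) : supNormC D f ≤ supNormC E f :=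
  iSup_le fun z => le_iSup (fun z : E => (‖f (z : ℂ)‖₊ : ℝ≥0∞)) ⟨z, h z.2⟩

lemma supNormC_le_ringNormC (α : ℝ) (D : Set ℂ) (f : ℂ → ℝ) : supNormC D f ≤ ringNormC α D f :=
  le_self_add

lemma abs_rpow_mul_sub_le_toReal_ringNormC {α : ℝ} {D : Set ℂ} {f : ℂ → ℝ}
    (h : ringNormC α D f ≠ ⊤) {z z' : ℂ} (hz : z ∈ D) (hz' : z' ∈ D) :
    |‖z‖ ^ α * f z - ‖z'‖ ^ α * f z'| ≤ (ringNormC α D f).toReal * ‖z - z'‖ ^ α := by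
  rcases eq_or_ne z z' with rfl | hne
  · rw [sub_self, abs_zero]
    positivity
  have hpos : 0 < ‖z - z'‖ ^ α := Real.rpow_pos_of_pos (norm_pos_iff.2 (sub_ne_zero.2 hne)) _
  have h1 : (‖‖z‖ ^ α * f z - ‖z'‖ ^ α * f z'‖₊ : ℝ≥0∞) / ENNReal.ofReal (‖z - z'‖ ^ α) ≤
      ringNormC α D f :=
    le_add_left (le_iSup (fun p : {q : D × D // (q.1 : ℂ) ≠ (q.2 : ℂ)} =>
      (‖(‖(p.1.1 : ℂ)‖ ^ α) * f (p.1.1 : ℂ) - (‖(p.1.2 : ℂ)‖ ^ α) * f (p.1.2 : ℂ)‖₊ : ℝ≥0∞) /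
        ENNReal.ofReal (‖(p.1.1 : ℂ) - (p.1.2 : ℂ)‖ ^ α)) ⟨(⟨z, hz⟩, ⟨z', hz'⟩), hne⟩)
  have h2 := ENNReal.toReal_mono h h1
  rw [ENNReal.toReal_div, ENNReal.toReal_ofReal hpos.le, div_le_iff₀ hpos] at h2
  simpa using h2

lemma ringNormC_le_ofReal {α : ℝ} {D : Set ℂ} {g : ℂ → ℝ} {A B : ℝ} (hA : 0 ≤ A) (hB : 0 ≤ B)
    (h₁ : ∀ z ∈ D, |g z| ≤ A)
    (h₂ : ∀ z ∈ D, ∀ z' ∈ D, |‖z‖ ^ α * g z - ‖z'‖ ^ α * g z'| ≤ B * ‖z - z'‖ ^ α) :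
    ringNormC α D g ≤ ENNReal.ofReal (A + B) := by
  rw [ENNReal.ofReal_add hA hB]
  refine add_le_add (iSup_le fun z => ?_) (iSup_le fun p => ?_)
  · rw [← enorm_eq_nnnorm, Real.enorm_eq_ofReal_abs]
    exact ENNReal.ofReal_le_ofReal (h₁ z z.2)
  · refine ENNReal.div_le_of_le_mul ?_
    rw [← ENNReal.ofReal_mul hB, ← enorm_eq_nnnorm, Real.enorm_eq_ofReal_abs]
    exact ENNReal.ofReal_le_ofReal (h₂ _ p.1.1.2 _ p.1.2.2)

lemma IsSectorSol.hess_eq_zero {α β : ℝ} (hβ0 : 0 < β) (hβ : β < 1 / 2) {f Ψ : ℂ → ℝ} {N : ℝ}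
    (h : IsSectorSol α β f Ψ 0 N) {z : ℂ} (hz : z ∈ Sector β) (v₁ v₂ : ℂ) :
    hess Ψ v₁ v₂ z = 0 := by
  obtain ⟨C₀, hC₀⟩ := h.growth
  have h0 : ∀ w ∈ Sector β, Ψ w = 0 := fun w hw => by
    have h1 := abs_le_of_sector hβ0 hβ le_rfl h.cont h.smooth
      (fun y hy => by rw [h.lap_eq y hy]; exact h.bound y hy) h.bdry hC₀ hw
    rw [zero_mul, zero_mul] at h1
    exact abs_nonpos_iff.1 h1
  have h2 : Ψ =ᶠ[𝓝 z] fun _ => 0 :=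
    Filter.eventuallyEq_of_mem ((isOpen_sector hβ0 hβ).mem_nhds hz) h0
  rw [hess_congr h2]
  simp [hess]

lemma abs_rpow_mul_sub_le {α A B : ℝ} (hα0 : 0 ≤ α) (hα1 : α ≤ 1) {g : ℂ → ℝ}
    {z z' : ℂ} (hz : z ≠ 0) (h₁ : |g z'| ≤ A) (h₂ : |g z - g z'| ≤ B * (‖z - z'‖ / ‖z‖) ^ α) :
    |‖z‖ ^ α * g z - ‖z'‖ ^ α * g z'| ≤ (A + B) * ‖z - z'‖ ^ α := by
  have hz0 : 0 < ‖z‖ ^ α := Real.rpow_pos_of_pos (norm_pos_iff.2 hz) _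
  have h3 := abs_rpow_norm_sub_le hα0 hα1 z z'
  have h4 : ‖z‖ ^ α * g z - ‖z'‖ ^ α * g z' =
      ‖z‖ ^ α * (g z - g z') + g z' * (‖z‖ ^ α - ‖z'‖ ^ α) := by ring
  rw [Real.div_rpow (norm_nonneg _) (norm_nonneg _), mul_div_assoc', le_div_iff₀ hz0] at h₂
  rw [h4]
  refine (abs_add_le _ _).trans ?_
  rw [abs_mul, abs_mul, abs_of_pos hz0]
  have h5 : |g z'| * |‖z‖ ^ α - ‖z'‖ ^ α| ≤ A * ‖z - z'‖ ^ α :=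
    mul_le_mul h₁ h3 (abs_nonneg _) ((abs_nonneg _).trans h₁)
  linarith

end

/-- **Scale-invariant Hölder estimate for the Dirichlet Laplacian on a sector
(Lemma 3.6).** For `0 < β < 1/2`, `0 < α < 1`, there are constants `C, c > 0` depending only
on `α, β` such that for every `f` with `0 < ‖f‖_{∘C^α(Ω̄_β)} < ∞` and the unique `Ψ` with
`ΔΨ = f` in `Ω_β`, `Ψ = 0` on `∂Ω_β` and `|Ψ(x)| ≤ C₀ |x|² ln(e+|x|)`:
(i) `‖∇²Ψ‖_{L^∞} ≤ C ‖f‖_{L^∞} (1 + ln(1 + c ‖f‖_{∘C^α}/‖f‖_{L^∞}))`, and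
(ii) `‖∇²Ψ‖_{∘C^α(Ω̄_β)} ≤ C ‖f‖_{∘C^α(Ω̄_β)}`. -/
theorem sector_ring_holder_estimate (β α : ℝ) (hβ0 : 0 < β) (hβ : β < 1/2)
    (hα0 : 0 < α) (hα1 : α < 1) :
    ∃ C c : ℝ, 0 < C ∧ 0 < c ∧
      ∀ (f Ψ : ℂ → ℝ),
      0 < ringNormC α (closure (Sector β)) f →
      ringNormC α (closure (Sector β)) f < ⊤ →
      ContinuousOn Ψ (closure (Sector β)) →
      ContDiffOn ℝ 2 Ψ (Sector β) →
      (∀ z ∈ Sector β, lap Ψ z = f z) →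
      (∀ z ∈ frontier (Sector β), Ψ z = 0) →
      (∃ C₀ : ℝ, ∀ z ∈ Sector β, |Ψ z| ≤ C₀ * ‖z‖ ^ 2 * Real.log (Real.exp 1 + ‖z‖)) →
      ∀ v₁ ∈ ({1, Complex.I} : Set ℂ), ∀ v₂ ∈ ({1, Complex.I} : Set ℂ),
        (∀ z ∈ Sector β,
          |hess Ψ v₁ v₂ z| ≤
            C * (supNormC (Sector β) f).toReal *
              (1 + Real.log (1 + c * (ringNormC α (closure (Sector β)) f).toReal /
                (supNormC (Sector β) f).toReal))) ∧
        ringNormC α (Sector β) (hess Ψ v₁ v₂) ≤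
          ENNReal.ofReal C * ringNormC α (closure (Sector β)) f := by

  obtain ⟨C₁, hC₁, hlog⟩ := exists_abs_hess_le_log hβ0 hβ hα0 hα1
  obtain ⟨C₂, hC₂, hhol⟩ := exists_abs_hess_sub_le hβ0 hβ hα0 hα1
  refine ⟨C₁ + 3 * C₂, 2, by positivity, two_pos, ?_⟩
  intro f Ψ hpos hfin hcont hsmooth hlap hbdry hgrowth v₁ hv₁ v₂ hv₂
  have hsub : supNormC (Sector β) f ≤ ringNormC α (closure (Sector β)) f :=
    (supNormC_mono subset_closure f).trans (supNormC_le_ringNormC _ _ _)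
  have hMN := ENNReal.toReal_mono hfin.ne hsub
  have hN : 0 < (ringNormC α (closure (Sector β)) f).toReal := ENNReal.toReal_pos hpos.ne' hfin.ne
  have hNeq := ENNReal.ofReal_toReal hfin.ne
  have hM : 0 ≤ (supNormC (Sector β) f).toReal := ENNReal.toReal_nonneg
  have hbound : ∀ z ∈ Sector β, |f z| ≤ (supNormC (Sector β) f).toReal := fun z hz =>
    abs_le_toReal_supNormC (hsub.trans_lt hfin).ne hz
  have hholder : ∀ z ∈ Sector β, ∀ z' ∈ Sector β, |‖z‖ ^ α * f z - ‖z'‖ ^ α * f z'| ≤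
      (ringNormC α (closure (Sector β)) f).toReal * ‖z - z'‖ ^ α := fun z hz z' hz' =>
    abs_rpow_mul_sub_le_toReal_ringNormC hfin.ne (subset_closure hz) (subset_closure hz')
  generalize (supNormC (Sector β) f).toReal = M at *
  generalize (ringNormC α (closure (Sector β)) f).toReal = N at *
  have hsol : IsSectorSol α β f Ψ M N := ⟨hcont, hsmooth, hlap, hbdry, hgrowth, hbound, hholder⟩
  constructor
  · intro z hz
    rcases hM.eq_or_lt with rfl | hM
    · rw [hsol.hess_eq_zero hβ0 hβ hz]
      simp
    · refine (hlog hM hMN hsol v₁ hv₁ v₂ hv₂ z hz).trans ?_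
      have h1 : 0 ≤ Real.log (1 + 2 * N / M) :=
        Real.log_nonneg (le_add_of_nonneg_right (by positivity))
      gcongr
      linarith
  · have hsol' : IsSectorSol α β f Ψ N N :=
      ⟨hcont, hsmooth, hlap, hbdry, hgrowth, fun z hz => (hbound z hz).trans hMN, hholder⟩
    obtain ⟨h1, h2⟩ := hhol hN hsol' v₁ hv₁ v₂ hv₂
    have h3 := ringNormC_le_ofReal (A := C₂ * N) (B := C₂ * N + C₂ * N) (by positivity)
      (by positivity) h1 fun z hz z' hz' =>
        abs_rpow_mul_sub_le hα0.le hα1.le hz.1 (h1 z' hz') (h2 z hz z' hz')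
    refine h3.trans ?_
    rw [← hNeq, ← ENNReal.ofReal_mul (by positivity)]
    exact ENNReal.ofReal_le_ofReal (by nlinarith [mul_pos hC₁ hN])
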